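/- arXiv:1703.00677 — 2 statements merged into one kernel-verified Lean document; each statement's English description precedes it below -/
import Mathlib

section
/- Let (S,d) be a complete separable metric space and let (μ_n) be a sequence of finite signed Borel measures on S such that sup_n ‖μ_n‖_TV < ∞. If for every f ∈ BL(S) the sequence of integrals ∫_S f dμ_n converges in ℝ, then there exists a finite signed Borel measure μ on S such that ‖μ_n − μ‖*_BL → 0 as n → ∞. -/
open MeasureTheory Filter Topology

/-- A function is bounded Lipschitz. -/
def IsBL {S : Type*} [PseudoMetricSpace S] (f : S → ℝ) : Prop :=
  (∃ C : ℝ, ∀ x, |f x| ≤ C) ∧ ∃ K : NNReal, LipschitzWith K f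

/-- Pairing of a finite signed Borel measure with a function, via the Jordan decomposition:
`⟨μ, f⟩ = ∫ f dμ⁺ - ∫ f dμ⁻`. -/
noncomputable def pairing {S : Type*} [MeasurableSpace S] (μ : SignedMeasure S) (f : S → ℝ) : ℝ :=
  (∫ x, f x ∂μ.toJordanDecomposition.posPart) - ∫ x, f x ∂μ.toJordanDecomposition.negPart

/-- Total variation norm of a finite signed measure: `‖μ‖_TV = |μ|(S)`. -/
noncomputable def tvNorm {S : Type*} [MeasurableSpace S] (μ : SignedMeasure S) : ℝ :=
  (μ.totalVariation Set.univ).toReal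

/-- Dual bounded Lipschitz norm:
`‖μ‖*_BL = sup { |⟨μ, f⟩| : f ∈ BL(S), ‖f‖_∞ + |f|_L ≤ 1 }`. -/
noncomputable def blDualNorm {S : Type*} [PseudoMetricSpace S] [MeasurableSpace S]
    (μ : SignedMeasure S) : ℝ :=
  sSup {r : ℝ | ∃ (f : S → ℝ) (C : ℝ) (K : NNReal), (∀ x, |f x| ≤ C) ∧
    LipschitzWith K f ∧ C + (K : ℝ) ≤ 1 ∧ r = |pairing μ f|}

/-!
For pointwise convergence, the Lipschitz balls `{f | ‖f‖_∞ ≤ 1, |f|_L ≤ K}` are compact and each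
`⟨μ_n, ·⟩` is continuous on them. By Baire's theorem the sequence `⟨μ_n, ·⟩` oscillates little,
uniformly in large `n`, on all functions of a ball that agree with some `f₀` on some finite set; a
cut-off transports this from `f₀` to `0`, so the functionals are equicontinuous on each ball and
converge uniformly there.

The limit functional `φ` is again continuous on the balls. It is small on functions vanishing near
the support of a bump that almost maximizes `φ`, since such a function can be added to the bump;
this is a form of tightness. Hence `φ` is the limit of discrete measures obtained from finer and
finer partitions of unity, and Prokhorov's theorem applied to their positive and negative parts
yields a signed measure representing `φ`.
-/

open scoped NNReal

section BoundedLipschitz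

variable {S : Type*} [PseudoMetricSpace S]

lemma isBL_const (c : ℝ) : IsBL fun _ : S => c :=
  ⟨⟨|c|, fun _ => le_rfl⟩, 0, .const c⟩

lemma IsBL.add {f g : S → ℝ} : IsBL f → IsBL g → IsBL (f + g)
  | ⟨⟨A, hA⟩, K, hK⟩, ⟨⟨B, hB⟩, L, hL⟩ =>
    ⟨⟨A + B, fun x => (abs_add_le _ _).trans (add_le_add (hA x) (hB x))⟩, K + L, hK.add hL⟩

lemma IsBL.const_smul {f : S → ℝ} (c : ℝ) : IsBL f → IsBL (c • f)
  | ⟨⟨A, hA⟩, K, hK⟩ =>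
    ⟨⟨|c| * A, fun x => (abs_mul c (f x)).trans_le (by gcongr; exact hA x)⟩, ‖c‖₊ * K,
      (lipschitzWith_smul c).comp hK⟩

protected lemma IsBL.max {f g : S → ℝ} : IsBL f → IsBL g → IsBL fun x => max (f x) (g x)
  | ⟨⟨A, hA⟩, _, hK⟩, ⟨⟨B, hB⟩, _, hL⟩ =>
    ⟨⟨max A B, fun _ => abs_max_le_max_abs_abs.trans (max_le_max (hA _) (hB _))⟩, _, hK.max hL⟩

/-- The space `BL(S)` as a subspace of `S → ℝ`; its subspace topology is that of pointwise
convergence. -/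
def BL (S : Type*) [PseudoMetricSpace S] : Submodule ℝ (S → ℝ) where
  carrier := {f | IsBL f}
  zero_mem' := isBL_const 0
  add_mem' := IsBL.add
  smul_mem' c _ := IsBL.const_smul c

/-- The `K`-Lipschitz functions with values in `[-1, 1]`. -/
def lipBall (S : Type*) [PseudoMetricSpace S] (K : ℝ≥0) : Set (BL S) :=
  {f | (∀ x, |f.1 x| ≤ 1) ∧ LipschitzWith K f.1}

lemma exists_mem_lipBall {K : ℝ≥0} {f : S → ℝ} (hb : ∀ x, |f x| ≤ 1) (hf : LipschitzWith K f) :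
    ∃ g ∈ lipBall S K, g.1 = f :=
  ⟨⟨f, ⟨1, hb⟩, K, hf⟩, ⟨hb, hf⟩, rfl⟩

lemma isCompact_lipBall (K : ℝ≥0) : IsCompact (lipBall S K) := by
  have image_eq : Subtype.val '' lipBall S K =
      (Set.univ.pi fun _ => Set.Icc (-1) 1) ∩ {f : S → ℝ | LipschitzWith K f} := by
    ext f
    constructor
    · rintro ⟨g, ⟨hb, hK⟩, rfl⟩
      exact ⟨fun x _ => abs_le.1 (hb x), hK⟩
    · rintro ⟨hb, hK⟩
      exact exists_mem_lipBall (fun x => abs_le.2 (hb x trivial)) hK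
  rw [Subtype.isCompact_iff, image_eq]
  exact (isCompact_univ_pi fun _ => isCompact_Icc).inter_right (isClosed_setOfPred_lipschitzWith K)

/-- The point of `[a - c, a + c]` closest to `b`. -/
def clamp (a c b : ℝ) : ℝ := max (a - c) (min (a + c) b)

lemma clamp_eq_right {a c b : ℝ} (h : |b - a| ≤ c) : clamp a c b = b := by
  grind [clamp, abs_le]

lemma clamp_zero_radius (a b : ℝ) : clamp a 0 b = a := by grind [clamp]

lemma abs_clamp_zero_center_le {c : ℝ} (hc : 0 ≤ c) (b : ℝ) : |clamp 0 c b| ≤ c := by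
  grind [clamp]

lemma abs_clamp_le {a c b : ℝ} (hc : 0 ≤ c) : |clamp a c b| ≤ max |a| |b| := by
  grind [clamp]

lemma abs_sub_clamp_zero_center_le {c : ℝ} (hc : 0 ≤ c) (b : ℝ) : |b - clamp 0 c b| ≤ |b| := by
  grind [clamp]

lemma abs_clamp_sub_clamp_zero_center_sub_le {a c b : ℝ} (hc : 0 ≤ c) :
    |clamp a c b - clamp 0 c b - a| ≤ |a| := by
  grind [clamp]

lemma lipschitzWith_clamp {f c g : S → ℝ} {Kf Kc Kg : ℝ≥0} (hf : LipschitzWith Kf f)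
    (hc : LipschitzWith Kc c) (hg : LipschitzWith Kg g) :
    LipschitzWith (max (Kf + Kc) Kg) fun x => clamp (f x) (c x) (g x) := by
  simpa [clamp] using (hf.sub hc).max ((hf.add hc).min hg)

/-- Mathlib's `thickenedIndicator` as a real-valued function: it equals `1` on `E`, vanishes off the
`δ`-thickening of `E`, and is `δ⁻¹`-Lipschitz. -/
noncomputable def bump {δ : ℝ} (hδ : 0 < δ) (E : Set S) (x : S) : ℝ := thickenedIndicator hδ E x

section Bump

variable {δ : ℝ} (hδ : 0 < δ) {E : Set S} {x : S}

lemma bump_nonneg : 0 ≤ bump hδ E x := NNReal.coe_nonneg _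

lemma bump_le_one : bump hδ E x ≤ 1 := thickenedIndicator_le_one hδ E x

lemma abs_bump_le_one : |bump hδ E x| ≤ 1 :=
  (abs_of_nonneg (bump_nonneg hδ)).trans_le (bump_le_one hδ)

lemma bump_eq_one (hx : x ∈ E) : bump hδ E x = 1 :=
  congrArg NNReal.toReal (thickenedIndicator_one hδ E hx)

lemma bump_eq_zero (hx : x ∉ Metric.thickening δ E) : bump hδ E x = 0 :=
  congrArg NNReal.toReal (thickenedIndicator_zero hδ E hx)

variable (E) in
lemma lipschitzWith_bump : LipschitzWith δ.toNNReal⁻¹ (bump hδ E) :=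
  lipschitzWith_thickenedIndicator hδ E

end Bump

lemma abs_le_mul_of_mem_thickening {K : ℝ≥0} {f : S → ℝ} (hf : LipschitzWith K f) {E : Set S}
    (h0 : ∀ y ∈ E, f y = 0) {δ : ℝ} {x : S} (hx : x ∈ Metric.thickening δ E) :
    |f x| ≤ K * δ := by
  obtain ⟨y, hy, hxy⟩ := Metric.mem_thickening_iff.1 hx
  calc |f x| = dist (f x) (f y) := by rw [h0 y hy, Real.dist_0_eq_abs]
    _ ≤ K * dist x y := hf.dist_le_mul x y
    _ ≤ K * δ := by gcongr

end BoundedLipschitz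

section Functionals

variable {S : Type*} [PseudoMetricSpace S]

/-- The linear functional `φ` on `BL(S)` has norm at most `C` for the sup norm. The bound is
required for every `M ≥ 0`, which forces `0 ≤ C` even when `S` is empty. -/
def SupBounded (C : ℝ) (φ : BL S →ₗ[ℝ] ℝ) : Prop :=
  ∀ (f : BL S) (M : ℝ), 0 ≤ M → (∀ x, |f.1 x| ≤ M) → |φ f| ≤ C * M

lemma SupBounded.nonneg {C : ℝ} {φ : BL S →ₗ[ℝ] ℝ} (hφ : SupBounded C φ) : 0 ≤ C := by
  simpa using hφ 0 1 zero_le_one (by simp)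

/-- A family of functionals on `BL(S)` is uniformly small on the functions of each Lipschitz ball
that vanish on a suitable finite set. For sup-bounded families this is equicontinuity on the
Lipschitz balls for pointwise convergence. -/
def EquiSmallOnVanishing {ι : Type*} (Φ : ι → BL S →ₗ[ℝ] ℝ) : Prop :=
  ∀ (K : ℝ≥0) (ε : ℝ), 0 < ε → ∃ F : Finset S, ∀ i, ∀ f ∈ lipBall S K,
    (∀ x ∈ F, f.1 x = 0) → |Φ i f| ≤ ε

section Equicontinuity

variable {ι : Type*} {Φ : ι → BL S →ₗ[ℝ] ℝ} {C : ℝ}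

lemma EquiSmallOnVanishing.exists_abs_le (hsmall : EquiSmallOnVanishing Φ)
    (hC : ∀ i, SupBounded C (Φ i)) (K : ℝ≥0) {ε : ℝ} (hε : 0 < ε) :
    ∃ F : Finset S, ∃ η > 0, ∀ i, ∀ f ∈ lipBall S K, (∀ x ∈ F, |f.1 x| ≤ η) → |Φ i f| ≤ ε := by
  obtain ⟨F, hF⟩ := hsmall (K + K) (ε / 2) (half_pos hε)
  have hη : 0 < ε / (2 * (|C| + 1)) := by positivity
  refine ⟨F, _, hη, fun i f ⟨hb, hf⟩ hfF => ?_⟩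
  set η := ε / (2 * (|C| + 1))
  obtain ⟨g, ⟨-, hgK⟩, hg⟩ := exists_mem_lipBall (f := fun x => clamp 0 η (f.1 x))
    (fun x => (abs_clamp_le hη.le).trans (by simpa using hb x))
    (by simpa using lipschitzWith_clamp (LipschitzWith.const 0) (LipschitzWith.const η) hf)
  have hg x : g.1 x = clamp 0 η (f.1 x) := congrFun hg x
  have large : |Φ i (f - g)| ≤ ε / 2 := by
    refine hF i _ ⟨fun x => ?_, hf.sub hgK⟩ fun x hx => ?_
    · simpa [hg] using (abs_sub_clamp_zero_center_le hη.le _).trans (hb x)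
    · simp [hg, clamp_eq_right (a := 0) (by simpa using hfF x hx)]
  have small : |Φ i g| ≤ ε / 2 := by
    refine (hC i g η hη.le fun x => hg x ▸ abs_clamp_zero_center_le hη.le _).trans ?_
    rw [← mul_div_assoc, div_le_div_iff₀ (by positivity) two_pos]
    nlinarith [le_abs_self C]
  calc |Φ i f| = |Φ i (f - g) + Φ i g| := by rw [← map_add, sub_add_cancel]
    _ ≤ ε / 2 + ε / 2 := (abs_add_le _ _).trans (add_le_add large small)
    _ = ε := add_halves ε

lemma half_smul_sub_mem_lipBall {K : ℝ≥0} {f g : BL S} (hf : f ∈ lipBall S K)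
    (hg : g ∈ lipBall S K) : (1 / 2 : ℝ) • (f - g) ∈ lipBall S K := by
  refine ⟨fun x => ?_, LipschitzWith.of_dist_le_mul fun x y => ?_⟩
  · have := hf.1 x
    have := hg.1 x
    simp only [Submodule.coe_smul, Submodule.coe_sub, Pi.smul_apply, Pi.sub_apply, smul_eq_mul]
    grind
  · have := hf.2.dist_le_mul x y
    have := hg.2.dist_le_mul x y
    simp only [Submodule.coe_smul, Submodule.coe_sub, Pi.smul_apply, Pi.sub_apply, smul_eq_mul,
      Real.dist_eq] at *
    grind

lemma EquiSmallOnVanishing.equicontinuousOn (hsmall : EquiSmallOnVanishing Φ)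
    (hC : ∀ i, SupBounded C (Φ i)) (K : ℝ≥0) :
    EquicontinuousOn (fun i => (Φ i : BL S → ℝ)) (lipBall S K) := by
  refine (equicontinuous_restrict_iff _).1 fun f₀ => Metric.equicontinuousAt_iff_right.2 ?_
  intro ε hε
  obtain ⟨F, η, hη, hF⟩ := hsmall.exists_abs_le hC K (show 0 < ε / 4 by positivity)
  have close_on_F : ∀ᶠ f : lipBall S K in 𝓝 f₀, ∀ x ∈ F, |f₀.1.1 x - f.1.1 x| < η := by
    refine (eventually_all_finset F).2 fun x _ => ?_
    have : Continuous fun f : lipBall S K => |f₀.1.1 x - f.1.1 x| :=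
      (continuous_const.sub ((continuous_apply x).comp
        (continuous_subtype_val.comp continuous_subtype_val))).abs
    exact this.continuousAt.eventually_lt continuousAt_const (by simpa)
  filter_upwards [close_on_F] with f hf i
  have half_diff := hF i _ (half_smul_sub_mem_lipBall f₀.2 f.2) fun x hx => by
    simp only [Submodule.coe_smul, Submodule.coe_sub, Pi.smul_apply, Pi.sub_apply, smul_eq_mul,
      abs_mul, abs_of_pos (one_half_pos (α := ℝ))]
    linarith [hf x hx]
  rw [map_smul, map_sub, smul_eq_mul, abs_mul, abs_of_pos one_half_pos] at half_diff
  simp only [Function.comp_apply, Set.domRestrict_apply, Real.dist_eq]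
  linarith

variable {l : Filter ι} {φ : BL S →ₗ[ℝ] ℝ}

lemma EquiSmallOnVanishing.of_tendsto [l.NeBot] (hΦ : EquiSmallOnVanishing Φ)
    (hφ : ∀ f, Tendsto (fun i => Φ i f) l (𝓝 (φ f))) :
    EquiSmallOnVanishing fun _ : Unit => φ := by
  intro K ε hε
  obtain ⟨F, hF⟩ := hΦ K ε hε
  exact ⟨F, fun _ f hf hfF => le_of_tendsto (hφ f).abs (.of_forall fun i => hF i f hf hfF)⟩

lemma SupBounded.of_tendsto [l.NeBot] (hΦ : ∀ i, SupBounded C (Φ i))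
    (hφ : ∀ f, Tendsto (fun i => Φ i f) l (𝓝 (φ f))) :
    SupBounded C φ := fun f M hM hf =>
  le_of_tendsto (hφ f).abs (.of_forall fun i => hΦ i f M hM hf)

lemma EquiSmallOnVanishing.tendstoUniformlyOn (hΦ : EquiSmallOnVanishing Φ)
    (hC : ∀ i, SupBounded C (Φ i)) (hφ : ∀ f, Tendsto (fun i => Φ i f) l (𝓝 (φ f))) (K : ℝ≥0) :
    TendstoUniformlyOn (fun i => (Φ i : BL S → ℝ)) φ l (lipBall S K) := by
  have : CompactSpace (lipBall S K) := isCompact_iff_compactSpace.1 (isCompact_lipBall K)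
  rw [tendstoUniformlyOn_iff_tendstoUniformly_comp_coe]
  refine UniformFun.tendsto_iff_tendstoUniformly.1 <|
    (((equicontinuous_restrict_iff _).2 (hΦ.equicontinuousOn hC K)).tendsto_uniformFun_iff_pi
      _ _).2 <| tendsto_pi_nhds.2 fun f => hφ f

end Equicontinuity

section Baire

variable {Φ : ℕ → BL S →ₗ[ℝ] ℝ} {C : ℝ} {K : ℝ≥0}

lemma exists_finset_forall_mem_of_mem_nhds {U : Set (lipBall S K)} {f₀ : lipBall S K}
    (hU : U ∈ 𝓝 f₀) :
    ∃ F : Finset S, ∀ f : lipBall S K, (∀ x ∈ F, f.1.1 x = f₀.1.1 x) → f ∈ U := by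
  have inducing : IsInducing fun f : lipBall S K => f.1.1 :=
    IsInducing.subtypeVal.comp IsInducing.subtypeVal
  rw [inducing.nhds_eq_comap, mem_comap] at hU
  obtain ⟨V, hV, hVU⟩ := hU
  rw [nhds_pi, mem_pi'] at hV
  obtain ⟨F, t, ht, htV⟩ := hV
  refine ⟨F, fun f hf => hVU (htV fun x hx => ?_)⟩
  exact Set.mem_of_eq_of_mem (hf x hx) (mem_of_mem_nhds (ht x))

lemma exists_osc_le_of_eqOn (hcont : ∀ n, ContinuousOn (Φ n) (lipBall S K))
    (hconv : ∀ f, ∃ l, Tendsto (fun n => Φ n f) atTop (𝓝 l)) {ε : ℝ} (hε : 0 < ε) :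
    ∃ N, ∃ f₀ ∈ lipBall S K, ∃ F : Finset S, ∀ f ∈ lipBall S K, (∀ x ∈ F, f.1 x = f₀.1 x) →
      ∀ n ≥ N, |Φ n f - Φ N f| ≤ ε := by
  have : CompactSpace (lipBall S K) := isCompact_iff_compactSpace.1 (isCompact_lipBall K)
  have : Nonempty (lipBall S K) := ⟨0, fun _ => by simp, LipschitzWith.const' 0⟩
  let X (N : ℕ) : Set (lipBall S K) := {f | ∀ n ≥ N, |Φ n f - Φ N f| ≤ ε}
  have closed N : IsClosed (X N) := by
    simp only [X, Set.ofPred_forall]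
    exact isClosed_iInter fun n => isClosed_iInter fun _ => isClosed_le
      ((hcont n).domRestrict.sub (hcont N).domRestrict).abs continuous_const
  have cover : ⋃ N, X N = Set.univ := by
    refine Set.eq_univ_of_forall fun f => Set.mem_iUnion.2 ?_
    obtain ⟨l, hl⟩ := hconv f
    obtain ⟨N, hN⟩ := Metric.cauchySeq_iff'.1 hl.cauchySeq ε hε
    exact ⟨N, fun n hn => (hN n hn).le⟩
  obtain ⟨N, f₀, hf₀⟩ := nonempty_interior_of_iUnion_of_closed closed cover
  obtain ⟨F, hF⟩ := exists_finset_forall_mem_of_mem_nhds (mem_interior_iff_mem_nhds.1 hf₀)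
  exact ⟨N, f₀, f₀.2, F, fun f hf hfF => hF ⟨f, hf⟩ hfF⟩

lemma exists_perturbation_of_eq_zero {f₀ g : BL S} {K' : ℝ≥0} {F : Set S} {δ : ℝ} (hδ : 0 < δ)
    (hf₀ : f₀ ∈ lipBall S K') (hg : g ∈ lipBall S K) (hgF : ∀ x ∈ F, g.1 x = 0)
    (hK' : K + δ.toNNReal⁻¹ ≤ K') :
    ∃ h ∈ lipBall S K', ∃ h₀ ∈ lipBall S K', (∀ x ∈ F, h.1 x = f₀.1 x) ∧
      (∀ x ∈ F, h₀.1 x = f₀.1 x) ∧ ∀ x, |(h - h₀ - g).1 x| ≤ K * δ := by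
  have hδK' : 0 + δ.toNNReal⁻¹ ≤ K' := by
    rw [zero_add]
    exact le_add_self.trans hK'
  obtain ⟨h, hh, h_eq⟩ := exists_mem_lipBall (f := fun x => clamp (g.1 x) (bump hδ F x) (f₀.1 x))
    (fun x => (abs_clamp_le (bump_nonneg hδ)).trans (max_le (hg.1 x) (hf₀.1 x)))
    ((lipschitzWith_clamp hg.2 (lipschitzWith_bump hδ F) hf₀.2).weaken (max_le hK' le_rfl))
  obtain ⟨h₀, hh₀, h₀_eq⟩ := exists_mem_lipBall (f := fun x => clamp 0 (bump hδ F x) (f₀.1 x))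
    (fun x => (abs_clamp_le (bump_nonneg hδ)).trans (by simpa using hf₀.1 x))
    ((lipschitzWith_clamp (LipschitzWith.const 0) (lipschitzWith_bump hδ F) hf₀.2).weaken
      (max_le hδK' le_rfl))
  refine ⟨h, hh, h₀, hh₀, fun x hx => ?_, fun x hx => ?_, fun x => ?_⟩
  · rw [h_eq]
    exact clamp_eq_right (by simpa [hgF x hx, bump_eq_one hδ hx] using hf₀.1 x)
  · rw [h₀_eq]
    exact clamp_eq_right (by simpa [bump_eq_one hδ hx] using hf₀.1 x)
  · simp only [Submodule.coe_sub, Pi.sub_apply, h_eq, h₀_eq]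
    by_cases hx : x ∈ Metric.thickening δ F
    · exact (abs_clamp_sub_clamp_zero_center_sub_le (bump_nonneg hδ)).trans
        (abs_le_mul_of_mem_thickening hg.2 hgF hx)
    · simp only [bump_eq_zero hδ hx, clamp_zero_radius, sub_zero, sub_self, abs_zero]
      positivity

lemma exists_abs_sub_le_of_eq_zero (hC : ∀ n, SupBounded C (Φ n))
    (hcont : ∀ K n, ContinuousOn (Φ n) (lipBall S K))
    (hconv : ∀ f, ∃ l, Tendsto (fun n => Φ n f) atTop (𝓝 l)) (K : ℝ≥0) {ε : ℝ} (hε : 0 < ε) :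
    ∃ N, ∃ F : Finset S, ∀ g ∈ lipBall S K, (∀ x ∈ F, g.1 x = 0) →
      ∀ n ≥ N, |Φ n g - Φ N g| ≤ ε := by
  have C_nonneg : 0 ≤ C := (hC 0).nonneg
  let δ : ℝ := ε / (4 * (C * K + 1))
  have hδ : 0 < δ := by positivity
  have hCδ : C * (K * δ) ≤ ε / 4 := by
    rw [← mul_assoc, ← mul_div_assoc, div_le_div_iff₀ (by positivity) (by positivity)]
    nlinarith
  obtain ⟨N, f₀, hf₀, F, hF⟩ :=
    exists_osc_le_of_eqOn (hcont (K + δ.toNNReal⁻¹)) hconv (show 0 < ε / 4 by positivity)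
  refine ⟨N, F, fun g hg hgF n hn => ?_⟩
  obtain ⟨h, hh, h₀, hh₀, hhF, hh₀F, hr⟩ :=
    exists_perturbation_of_eq_zero hδ hf₀ hg hgF le_rfl
  have osc_h := abs_le.1 (hF h hh hhF n hn)
  have osc_h₀ := abs_le.1 (hF h₀ hh₀ hh₀F n hn)
  have rem_n := abs_le.1 ((hC n _ _ (by positivity) hr).trans hCδ)
  have rem_N := abs_le.1 ((hC N _ _ (by positivity) hr).trans hCδ)
  simp only [map_sub] at rem_n rem_N
  rw [abs_le]
  constructor <;> linarith

lemma EquiSmallOnVanishing.of_forall_tendsto (hC : ∀ n, SupBounded C (Φ n))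
    (hsmall : ∀ n, EquiSmallOnVanishing fun _ : Unit => Φ n)
    (hconv : ∀ f, ∃ l, Tendsto (fun n => Φ n f) atTop (𝓝 l)) : EquiSmallOnVanishing Φ := by
  classical
  intro K ε hε
  have hcont K n : ContinuousOn (Φ n) (lipBall S K) :=
    ((hsmall n).equicontinuousOn (fun _ => hC n) K).continuousOn ()
  obtain ⟨N, F, hF⟩ := exists_abs_sub_le_of_eq_zero hC hcont hconv K (half_pos hε)
  choose G hG using fun n => hsmall n K (ε / 2) (half_pos hε)
  refine ⟨F ∪ (Finset.range (N + 1)).biUnion G, fun n g hg hg0 => ?_⟩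
  have small m (hm : m ≤ N) : |Φ m g| ≤ ε / 2 := hG m () g hg fun x hx =>
    hg0 x (Finset.mem_union_right _ (Finset.mem_biUnion.2 ⟨m, by simpa [Nat.lt_succ_iff], hx⟩))
  rcases le_total n N with hn | hn
  · linarith [small n hn]
  · have := hF g hg (fun x hx => hg0 x (Finset.mem_union_left _ hx)) n hn
    calc |Φ n g| = |(Φ n g - Φ N g) + Φ N g| := by rw [sub_add_cancel]
      _ ≤ ε / 2 + ε / 2 := (abs_add_le _ _).trans (add_le_add this (small N le_rfl))
      _ = ε := add_halves ε

end Baire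

section Tight

variable {φ : BL S →ₗ[ℝ] ℝ} {C ε δ : ℝ}

/-- The functional `φ` has norm at most `C` for the sup norm on the functions vanishing on `T`. -/
def SupBoundedOff (T : Set S) (C : ℝ) (φ : BL S →ₗ[ℝ] ℝ) : Prop :=
  ∀ (f : BL S) (M : ℝ), 0 ≤ M → (∀ x, |f.1 x| ≤ M) → (∀ x ∈ T, f.1 x = 0) → |φ f| ≤ C * M

lemma SupBounded.supBoundedOff (hφ : SupBounded C φ) (T : Set S) : SupBoundedOff T C φ :=
  fun f M hM hf _ => hφ f M hM hf

lemma supBoundedOff_of_le_one {T : Set S}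
    (h : ∀ f : BL S, (∀ x, |f.1 x| ≤ 1) → (∀ x ∈ T, f.1 x = 0) → φ f ≤ ε) :
    SupBoundedOff T ε φ := by
  intro f M hM hf hfT
  rcases hM.eq_or_lt with rfl | hM
  · have : f = 0 := Subtype.ext <| funext fun x => abs_nonpos_iff.1 (hf x)
    simp [this]
  have bound (c : ℝ) (hc : |c| = M⁻¹) : c * φ f ≤ ε := by
    rw [← smul_eq_mul, ← map_smul]
    refine h _ (fun x => ?_) fun x hx => by simp [hfT x hx]
    rw [Submodule.coe_smul, Pi.smul_apply, smul_eq_mul, abs_mul, hc]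
    exact inv_mul_le_one_of_le₀ (hf x) hM.le
  have upper := bound M⁻¹ (abs_of_pos (inv_pos.2 hM))
  have lower := bound (-M⁻¹) (by rw [abs_neg, abs_of_pos (inv_pos.2 hM)])
  rw [abs_le]
  constructor <;> · field_simp at upper lower; linarith

/-- A functional on `BL(S)` is tight if it is small on the functions of sup norm at most `1` that
vanish on the `δ`-neighbourhood of a suitable finite set. -/
def IsTightFunctional (φ : BL S →ₗ[ℝ] ℝ) : Prop :=
  ∀ ε > 0, ∀ δ > 0, ∃ F : Finset S, SupBoundedOff (Metric.thickening δ F) ε φ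

lemma abs_le_of_abs_le_on (hC : SupBounded C φ) {T : Set S} (hφ : SupBoundedOff T ε φ) {f : BL S}
    {η M : ℝ} (hη : 0 ≤ η) (hM : 0 ≤ M) (hfη : ∀ x ∈ T, |f.1 x| ≤ η) (hfM : ∀ x, |f.1 x| ≤ M) :
    |φ f| ≤ C * η + ε * M := by
  obtain ⟨-, K, hK⟩ := f.2
  let g : BL S := ⟨fun x => clamp 0 η (f.1 x), ⟨η, fun x => abs_clamp_zero_center_le hη _⟩, _,
    lipschitzWith_clamp (LipschitzWith.const 0) (LipschitzWith.const η) hK⟩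
  have small : |φ g| ≤ C * η := hC g η hη fun x => abs_clamp_zero_center_le hη _
  have large : |φ (f - g)| ≤ ε * M := by
    refine hφ (f - g) M hM (fun x => ?_) fun x hx => ?_
    · exact (abs_sub_clamp_zero_center_le hη _).trans (hfM x)
    · exact sub_eq_zero.2 (clamp_eq_right (by simpa using hfη x hx)).symm
  calc |φ f| = |φ g + φ (f - g)| := by rw [← map_add, add_sub_cancel]
    _ ≤ C * η + ε * M := (abs_add_le _ _).trans (add_le_add small large)

lemma IsTightFunctional.equiSmallOnVanishing (hφ : IsTightFunctional φ) (hC : SupBounded C φ) :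
    EquiSmallOnVanishing fun _ : Unit => φ := by
  intro K ε hε
  have C_nonneg := hC.nonneg
  have hδ : 0 < ε / (2 * (C * K + 1)) := by positivity
  obtain ⟨F, hF⟩ := hφ (ε / 2) (half_pos hε) _ hδ
  refine ⟨F, fun _ f hf hfF => (abs_le_of_abs_le_on hC hF (by positivity) zero_le_one
    (fun x hx => abs_le_mul_of_mem_thickening hf.2 hfF hx) hf.1).trans ?_⟩
  have : C * (K * (ε / (2 * (C * K + 1)))) ≤ ε / 2 := by
    rw [← mul_assoc, ← mul_div_assoc, div_le_div_iff₀ (by positivity) two_pos]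
    nlinarith
  linarith

/-- `f` takes values in `[-1, 1]` and vanishes off the `δ`-neighbourhood of the finite set `F`. -/
def IsBumpOn (δ : ℝ) (F : Finset S) (f : BL S) : Prop :=
  (∀ x, |f.1 x| ≤ 1) ∧ ∀ x ∉ Metric.thickening δ (F : Set S), f.1 x = 0

lemma SupBounded.exists_isBumpOn_almost_max (hC : SupBounded C φ) (δ : ℝ) (hε : 0 < ε) :
    ∃ F G, IsBumpOn δ F G ∧ ∀ F' G', IsBumpOn δ F' G' → φ G' < φ G + ε := by
  let V : Set ℝ := {t | ∃ F G, IsBumpOn δ F G ∧ φ G = t}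
  have nonempty : V.Nonempty := ⟨_, ∅, 0, ⟨by simp, by simp⟩, rfl⟩
  have bddAbove : BddAbove V := by
    refine ⟨C * 1, ?_⟩
    rintro _ ⟨F, G, hG, rfl⟩
    exact (le_abs_self _).trans (hC G 1 zero_le_one hG.1)
  obtain ⟨_, ⟨F, G, hG, rfl⟩, hlt⟩ :=
    exists_lt_of_lt_csSup nonempty (sub_lt_self (sSup V) hε)
  exact ⟨F, G, hG, fun F' G' hG' => by linarith [le_csSup bddAbove ⟨F', G', hG', rfl⟩]⟩

lemma EquiSmallOnVanishing.exists_isBumpOn_approx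
    (hsmall : EquiSmallOnVanishing fun _ : Unit => φ) (hε : 0 < ε) (hδ : 0 < δ) {f : BL S}
    (hf : ∀ x, |f.1 x| ≤ 1) :
    ∃ F g, IsBumpOn δ F g ∧ (∀ x, f.1 x = 0 → g.1 x = 0) ∧ |φ (f - g)| ≤ ε := by
  obtain ⟨-, K, hK⟩ := f.2
  obtain ⟨F, hF⟩ := hsmall (K + max (0 + δ.toNNReal⁻¹) K) ε hε
  have cut_lipschitz := lipschitzWith_clamp (LipschitzWith.const 0) (lipschitzWith_bump hδ F) hK
  obtain ⟨g, hg, g_eq⟩ := exists_mem_lipBall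
    (fun x => (abs_clamp_le (bump_nonneg hδ)).trans (by simpa using hf x)) cut_lipschitz
  have g_eq x : g.1 x = clamp 0 (bump hδ F x) (f.1 x) := congrFun g_eq x
  have fg_mem : f - g ∈ lipBall S (K + max (0 + δ.toNNReal⁻¹) K) := by
    refine ⟨fun x => ?_, hK.sub hg.2⟩
    simpa [g_eq] using (abs_sub_clamp_zero_center_le (bump_nonneg hδ) _).trans (hf x)
  refine ⟨F, g, ⟨hg.1, fun x hx => ?_⟩, fun x hx => ?_, hF () _ fg_mem fun x hx => ?_⟩
  · rw [g_eq, bump_eq_zero hδ hx, clamp_zero_radius]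
  · rw [g_eq, hx, clamp_eq_right (by simpa using bump_nonneg hδ)]
  · have : clamp 0 (bump hδ F x) (f.1 x) = f.1 x :=
      clamp_eq_right (by simpa [bump_eq_one hδ (Finset.mem_coe.2 hx)] using hf x)
    simp [g_eq, this]

lemma IsBumpOn.add [DecidableEq S] {F F' : Finset S} {G g : BL S} (hG : IsBumpOn δ F G)
    (hg : IsBumpOn δ F' g) (hgF : ∀ x ∈ Metric.thickening δ (F : Set S), g.1 x = 0) :
    IsBumpOn δ (F ∪ F') (G + g) := by
  refine ⟨fun x => ?_, fun x hx => ?_⟩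
  · by_cases hx : x ∈ Metric.thickening δ (F : Set S)
    · simpa [hgF x hx] using hG.1 x
    · simpa [hG.2 x hx] using hg.1 x
  · rw [Finset.coe_union, Metric.thickening_union, Set.mem_union, not_or] at hx
    simp [hG.2 x hx.1, hg.2 x hx.2]

lemma EquiSmallOnVanishing.isTightFunctional (hsmall : EquiSmallOnVanishing fun _ : Unit => φ)
    (hC : SupBounded C φ) : IsTightFunctional φ := by
  classical
  intro ε hε δ hδ
  obtain ⟨F, G, hG, hmax⟩ := hC.exists_isBumpOn_almost_max δ (half_pos hε)
  refine ⟨F, supBoundedOff_of_le_one fun f hf hfF => ?_⟩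
  obtain ⟨F', g, hg, hg0, hfg⟩ := hsmall.exists_isBumpOn_approx (half_pos hε) hδ hf
  have hGg := hmax _ _ (hG.add hg fun x hx => hg0 x (hfF x hx))
  have hfg := (abs_le.1 hfg).2
  rw [map_add] at hGg
  rw [map_sub] at hfg
  linarith

end Tight

section Partition

variable {F : Finset S} {r : ℝ} {u : S → BL S}

/-- A bounded Lipschitz partition of unity on the `r`-neighbourhood of the finite set `F`, with the
function `u y` supported in the ball of radius `2 * r` about `y`. Only `u y` for `y ∈ F` matters. -/
structure IsBLPartition (F : Finset S) (r : ℝ) (u : S → BL S) : Prop where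
  nonneg : ∀ y ∈ F, ∀ x, 0 ≤ (u y).1 x
  sum_le_one : ∀ x, ∑ y ∈ F, (u y).1 x ≤ 1
  sum_eq_one : ∀ x ∈ Metric.thickening r (F : Set S), ∑ y ∈ F, (u y).1 x = 1
  eq_zero : ∀ y ∈ F, ∀ x, 2 * r ≤ dist x y → (u y).1 x = 0

lemma exists_bl_bump_ball (hr : 0 < r) (z : S) :
    ∃ v : BL S, (∀ x, v.1 x ≤ 1) ∧ (∀ x ∈ Metric.ball z r, v.1 x = 1) ∧
      ∀ x, 2 * r ≤ dist x z → v.1 x = 0 := by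
  refine ⟨⟨bump hr (Metric.ball z r), ⟨1, fun _ => abs_bump_le_one hr⟩, _,
    lipschitzWith_bump hr _⟩, fun _ => bump_le_one hr,
    fun _ hx => bump_eq_one hr hx, fun x hx => bump_eq_zero hr fun hx' => ?_⟩
  obtain ⟨y, hy, hxy⟩ := Metric.mem_thickening_iff.1 hx'
  linarith [dist_triangle x y z, Metric.mem_ball.1 hy]

lemma IsBLPartition.exists_insert [DecidableEq S] (hu : IsBLPartition F r u) (hr : 0 < r) {z : S}
    (hz : z ∉ F) : ∃ u', IsBLPartition (insert z F) r u' := by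
  obtain ⟨v, v_le_one, v_eq_one, v_eq_zero⟩ := exists_bl_bump_ball hr z
  let w : BL S := ∑ y ∈ F, u y
  have w_apply x : w.1 x = ∑ y ∈ F, (u y).1 x := by simp [w]
  let t : BL S := ⟨_, w.2.max v.2⟩ - w
  have t_apply x : t.1 x = max (w.1 x) (v.1 x) - w.1 x := rfl
  have update_of_mem {y} (hy : y ∈ F) : Function.update u z t y = u y :=
    Function.update_of_ne (ne_of_mem_of_not_mem hy hz) _ _
  have sum_eq x : ∑ y ∈ insert z F, (Function.update u z t y).1 x = max (w.1 x) (v.1 x) := by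
    rw [Finset.sum_insert hz, Function.update_self,
      Finset.sum_congr rfl fun y hy => by rw [update_of_mem hy], ← w_apply, t_apply,
      sub_add_cancel]
  refine ⟨Function.update u z t, ?_, fun x => ?_, fun x hx => ?_, ?_⟩
  · refine Finset.forall_mem_insert _ _ _ |>.2 ⟨fun x => ?_, fun y hy x => ?_⟩
    · simp [t_apply]
    · simpa [update_of_mem hy] using hu.nonneg y hy x
  · rw [sum_eq, w_apply]
    exact max_le (hu.sum_le_one x) (v_le_one x)
  · rw [sum_eq, w_apply]
    rw [Finset.coe_insert, Set.insert_eq, Metric.thickening_union,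
      Metric.thickening_singleton] at hx
    rcases hx with hx | hx
    · rw [v_eq_one x hx, max_eq_right (hu.sum_le_one x)]
    · rw [hu.sum_eq_one x hx, max_eq_left (v_le_one x)]
  · refine Finset.forall_mem_insert _ _ _ |>.2 ⟨fun x hx => ?_, fun y hy x hx => ?_⟩
    · have : 0 ≤ w.1 x := w_apply x ▸ Finset.sum_nonneg fun y hy => hu.nonneg y hy x
      simp [t_apply, v_eq_zero x hx, this]
    · simpa [update_of_mem hy] using hu.eq_zero y hy x hx

lemma exists_isBLPartition (F : Finset S) (hr : 0 < r) : ∃ u, IsBLPartition F r u := by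
  classical
  induction F using Finset.induction_on with
  | empty => exact ⟨0, by simp, by simp, by simp, by simp⟩
  | insert z F hz ih =>
    obtain ⟨u, hu⟩ := ih
    exact hu.exists_insert hr hz

variable {φ : BL S →ₗ[ℝ] ℝ} {C ε : ℝ}

lemma IsBLPartition.sum_abs_apply_le (hu : IsBLPartition F r u) {T : Set S}
    (hφ : SupBoundedOff T ε φ) {A : Finset S} (hAF : A ⊆ F)
    (hA : ∀ y ∈ A, ∀ x ∈ T, 2 * r ≤ dist x y) : ∑ y ∈ A, |φ (u y)| ≤ ε := by
  let f : BL S := ∑ y ∈ A, (SignType.sign (φ (u y)) : ℝ) • u y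
  have f_apply x : f.1 x = ∑ y ∈ A, (SignType.sign (φ (u y)) : ℝ) * (u y).1 x := by simp [f]
  have abs_sign_le (t : ℝ) : |(SignType.sign t : ℝ)| ≤ 1 := by
    rcases lt_trichotomy t 0 with ht | rfl | ht <;> simp [*]
  have f_le x : |f.1 x| ≤ 1 := calc
    |f.1 x| ≤ ∑ y ∈ A, |(SignType.sign (φ (u y)) : ℝ) * (u y).1 x| :=
      f_apply x ▸ Finset.abs_sum_le_sum_abs _ _
    _ ≤ ∑ y ∈ A, (u y).1 x := Finset.sum_le_sum fun y hy => by
      rw [abs_mul, abs_of_nonneg (hu.nonneg y (hAF hy) x)]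
      exact mul_le_of_le_one_left (hu.nonneg y (hAF hy) x) (abs_sign_le _)
    _ ≤ ∑ y ∈ F, (u y).1 x :=
      Finset.sum_le_sum_of_subset_of_nonneg hAF fun y hy _ => hu.nonneg y hy x
    _ ≤ 1 := hu.sum_le_one x
  have f_eq_zero x (hx : x ∈ T) : f.1 x = 0 := by
    rw [f_apply]
    exact Finset.sum_eq_zero fun y hy => by rw [hu.eq_zero y (hAF hy) x (hA y hy x hx), mul_zero]
  calc ∑ y ∈ A, |φ (u y)| = φ f := by simp [f, sign_mul_self]
    _ ≤ |φ f| := le_abs_self _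
    _ ≤ ε := by simpa using hφ f 1 zero_le_one f_le f_eq_zero

lemma IsBLPartition.abs_sum_mul_le (hu : IsBLPartition F r u) {b : S → ℝ} {B : ℝ} (hB : 0 ≤ B)
    {x : S} (hb : ∀ y ∈ F, dist x y < 2 * r → |b y| ≤ B) : |∑ y ∈ F, b y * (u y).1 x| ≤ B := calc
  _ ≤ ∑ y ∈ F, |b y * (u y).1 x| := Finset.abs_sum_le_sum_abs _ _
  _ ≤ ∑ y ∈ F, B * (u y).1 x := Finset.sum_le_sum fun y hy => by
    rw [abs_mul, abs_of_nonneg (hu.nonneg y hy x)]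
    rcases lt_or_ge (dist x y) (2 * r) with hxy | hxy
    · exact mul_le_mul_of_nonneg_right (hb y hy hxy) (hu.nonneg y hy x)
    · simp [hu.eq_zero y hy x hxy]
  _ ≤ B := by
    rw [← Finset.mul_sum]
    exact mul_le_of_le_one_right hB (hu.sum_le_one x)

lemma IsBLPartition.abs_apply_sub_sum_le (hu : IsBLPartition F r u) (hr : 0 ≤ r)
    (hC : SupBounded C φ) (hφ : SupBoundedOff (Metric.thickening r (F : Set S)) ε φ) {f : BL S}
    {M : ℝ} {K : ℝ≥0} (hM : 0 ≤ M) (hfM : ∀ x, |f.1 x| ≤ M) (hfK : LipschitzWith K f.1) :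
    |φ f - ∑ y ∈ F, φ (u y) * f.1 y| ≤ C * (K * (2 * r)) + ε * (2 * M) := by
  let h : BL S := f - ∑ y ∈ F, f.1 y • u y
  have h_apply x : h.1 x = f.1 x - ∑ y ∈ F, f.1 y * (u y).1 x := by simp [h]
  have φ_h : φ h = φ f - ∑ y ∈ F, φ (u y) * f.1 y := by simp [h, mul_comm]
  rw [← φ_h]
  refine abs_le_of_abs_le_on hC hφ (by positivity) (by positivity) (fun x hx => ?_) fun x => ?_
  · have : h.1 x = ∑ y ∈ F, (f.1 x - f.1 y) * (u y).1 x := by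
      simp only [h_apply, sub_mul, Finset.sum_sub_distrib, ← Finset.mul_sum, hu.sum_eq_one x hx,
        mul_one]
    rw [this]
    refine hu.abs_sum_mul_le (by positivity) fun y _ hxy => ?_
    exact (hfK.dist_le_mul x y).trans (by gcongr)
  · rw [h_apply]
    linarith [abs_sub (f.1 x) (∑ y ∈ F, f.1 y * (u y).1 x), hfM x,
      hu.abs_sum_mul_le hM (x := x) fun y _ _ => hfM y]

end Partition

section Discretization

variable {φ : BL S →ₗ[ℝ] ℝ} {C : ℝ}

lemma IsTightFunctional.exists_sum_abs_le_off_cthickening (hφ : IsTightFunctional φ)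
    {F : ℕ → Finset S} {r : ℕ → ℝ} {u : ℕ → S → BL S} (hu : ∀ k, IsBLPartition (F k) (r k) (u k))
    (hr : Tendsto r atTop (𝓝 0)) {ε δ : ℝ} (hε : 0 < ε) (hδ : 0 < δ) :
    ∃ G : Finset S, ∀ k, ∀ A ⊆ F k, (∀ y ∈ A, y ∉ Metric.cthickening δ (G : Set S)) →
      ∑ y ∈ A, |φ (u k y)| ≤ ε := by
  classical
  obtain ⟨G₀, hG₀⟩ := hφ ε hε (δ / 2) (half_pos hδ)
  obtain ⟨k₀, hk₀⟩ :=
    eventually_atTop.1 (hr.eventually_le_const (show 0 < δ / 4 by positivity))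
  refine ⟨G₀ ∪ (Finset.range k₀).biUnion F, fun k A hA hAG => ?_⟩
  rcases lt_or_ge k k₀ with hk | hk
  · have : A = ∅ := Finset.eq_empty_of_forall_notMem fun y hy =>
      hAG y hy <| Metric.self_subset_cthickening _ <| Finset.mem_coe.2 <|
        Finset.mem_union_right _ (Finset.mem_biUnion.2 ⟨k, Finset.mem_range.2 hk, hA hy⟩)
    simpa [this] using hε.le
  · refine (hu k).sum_abs_apply_le hG₀ hA fun y hy x hx => ?_
    by_contra! hxy
    obtain ⟨z, hz, hxz⟩ := Metric.mem_thickening_iff.1 hx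
    refine hAG y hy (Metric.mem_cthickening_of_dist_le y z δ _ (by simp [Finset.mem_coe.1 hz]) ?_)
    linarith [dist_triangle_left y z x, hk₀ k hk]

lemma IsTightFunctional.exists_discretization (hφ : IsTightFunctional φ) (hC : SupBounded C φ) :
    ∃ (F : ℕ → Finset S) (a : ℕ → S → ℝ), (∀ k, ∑ y ∈ F k, |a k y| ≤ C) ∧
      (∀ ε > 0, ∀ δ > 0, ∃ G : Finset S, ∀ k, ∀ A ⊆ F k,
        (∀ y ∈ A, y ∉ Metric.cthickening δ (G : Set S)) → ∑ y ∈ A, |a k y| ≤ ε) ∧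
      ∀ f : BL S, Tendsto (fun k => ∑ y ∈ F k, a k y * f.1 y) atTop (𝓝 (φ f)) := by
  let r (k : ℕ) : ℝ := 1 / (k + 1)
  have r_pos k : 0 < r k := by positivity
  have r_tendsto : Tendsto r atTop (𝓝 0) := tendsto_one_div_add_atTop_nhds_zero_nat
  choose F hF using fun k => hφ (r k) (r_pos k) (r k) (r_pos k)
  choose u hu using fun k => exists_isBLPartition (F k) (r_pos k)
  refine ⟨F, fun k y => φ (u k y), fun k => ?_, fun ε hε δ hδ =>
    hφ.exists_sum_abs_le_off_cthickening hu r_tendsto hε hδ, fun f => ?_⟩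
  · exact (hu k).sum_abs_apply_le (hC.supBoundedOff ∅) subset_rfl (by simp)
  · obtain ⟨⟨M, hM⟩, K, hK⟩ := f.2
    have bound k := (hu k).abs_apply_sub_sum_le (r_pos k).le hC (hF k) (abs_nonneg M)
      (fun x => (hM x).trans (le_abs_self M)) hK
    have bound_tendsto : Tendsto (fun k => C * (K * (2 * r k)) + r k * (2 * |M|)) atTop (𝓝 0) := by
      simpa using (((r_tendsto.const_mul 2).const_mul (K : ℝ)).const_mul C).add
        (r_tendsto.mul_const (2 * |M|))
    refine tendsto_iff_dist_tendsto_zero.2 (squeeze_zero (fun _ => dist_nonneg) (fun k => ?_)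
      bound_tendsto)
    rw [dist_comm]
    exact bound k

end Discretization

end Functionals

section Pairing

variable {S : Type*} [MeasurableSpace S]

lemma abs_pairing_le_mul_totalVariation (μ : SignedMeasure S) {f : S → ℝ} {M : ℝ}
    (hM : ∀ x, |f x| ≤ M) {A : Set S} (hA : ∀ x ∉ A, f x = 0) :
    |pairing μ f| ≤ M * μ.totalVariation.real A := by
  have abs_integral_le (m : Measure S) [IsFiniteMeasure m] : |∫ x, f x ∂m| ≤ M * m.real A := by
    rw [← setIntegral_eq_integral_of_forall_compl_eq_zero hA]
    exact norm_setIntegral_le_of_norm_le_const (f := f) (measure_lt_top m A) fun x _ => hM x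
  rw [SignedMeasure.totalVariation, measureReal_add_apply, mul_add]
  exact (abs_sub _ _).trans (add_le_add (abs_integral_le _) (abs_integral_le _))

variable [PseudoMetricSpace S]

lemma blDualNorm_nonneg (μ : SignedMeasure S) : 0 ≤ blDualNorm μ := by
  refine Real.sSup_nonneg ?_
  rintro _ ⟨f, C, K, -, -, -, rfl⟩
  exact abs_nonneg _

lemma blDualNorm_le {μ : SignedMeasure S} {ε : ℝ} (hε : 0 ≤ ε)
    (h : ∀ f ∈ lipBall S 1, |pairing μ f.1| ≤ ε) : blDualNorm μ ≤ ε := by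
  refine Real.sSup_le ?_ hε
  rintro _ ⟨f, C, K, hfC, hfK, hCK, rfl⟩
  refine h ⟨f, ⟨C, hfC⟩, K, hfK⟩ ⟨fun x => (hfC x).trans ?_, .of_dist_le_mul fun x y => ?_⟩
  · linarith [K.coe_nonneg]
  · have K_le_one : (K : ℝ) ≤ 1 := by linarith [(abs_nonneg _).trans (hfC x)]
    exact (hfK.dist_le_mul x y).trans (mul_le_mul_of_nonneg_right K_le_one dist_nonneg)

variable [OpensMeasurableSpace S]

lemma IsBL.integrable {f : S → ℝ} (hf : IsBL f) (m : Measure S) [IsFiniteMeasure m] :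
    Integrable f m := by
  obtain ⟨⟨C, hC⟩, K, hK⟩ := hf
  exact .of_bound hK.continuous.aestronglyMeasurable C (.of_forall hC)

/-- The pairing of a signed measure with bounded Lipschitz functions, as a linear functional. -/
noncomputable def pairingₗ (μ : SignedMeasure S) : BL S →ₗ[ℝ] ℝ where
  toFun f := pairing μ f.1
  map_add' f g := by
    simp only [pairing, Submodule.coe_add, Pi.add_apply]
    rw [integral_add (f.2.integrable _) (g.2.integrable _),
      integral_add (f.2.integrable _) (g.2.integrable _)]
    ring
  map_smul' c f := by
    simp only [pairing, Submodule.coe_smul, Pi.smul_apply, smul_eq_mul, integral_const_mul,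
      RingHom.id_apply]
    ring

lemma supBounded_pairingₗ {μ : SignedMeasure S} {C : ℝ} (hμ : tvNorm μ ≤ C) :
    SupBounded C (pairingₗ μ) := fun f M hM hf => calc
  |pairing μ f.1| ≤ M * tvNorm μ :=
    abs_pairing_le_mul_totalVariation μ hf (A := Set.univ) (by simp)
  _ ≤ C * M := by rw [mul_comm C]; gcongr

lemma exists_finset_measureReal_compl_thickening_le [TopologicalSpace.SeparableSpace S]
    (m : Measure S) [IsFiniteMeasure m] {η r : ℝ} (hη : 0 < η) (hr : 0 < r) :
    ∃ F : Finset S, m.real (Metric.thickening r (F : Set S))ᶜ ≤ η := by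
  classical
  rcases isEmpty_or_nonempty S with _ | _
  · exact ⟨∅, by simpa [m.eq_zero_of_isEmpty] using hη.le⟩
  let F (N : ℕ) : Finset S := (Finset.range N).image (TopologicalSpace.denseSeq S)
  let A (N : ℕ) : Set S := (Metric.thickening r (F N : Set S))ᶜ
  have A_antitone : Antitone A := fun N N' h => Set.compl_subset_compl.2 <|
    Metric.thickening_subset_of_subset r <| by simp only [F]; gcongr
  have iInter_A : ⋂ N, A N = ∅ := by
    refine Set.eq_empty_of_forall_notMem fun x hx => ?_
    obtain ⟨j, hj⟩ := (TopologicalSpace.denseRange_denseSeq S).exists_dist_lt x hr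
    exact Set.mem_iInter.1 hx (j + 1) (Metric.mem_thickening_iff.2
      ⟨_, Finset.mem_coe.2 (Finset.mem_image_of_mem _ (Finset.self_mem_range_succ j)), hj⟩)
  have measure_A_tendsto := tendsto_measure_iInter_atTop (μ := m)
    (fun N => Metric.isOpen_thickening.measurableSet.compl.nullMeasurableSet) A_antitone
    ⟨0, measure_ne_top _ _⟩
  rw [iInter_A, measure_empty] at measure_A_tendsto
  obtain ⟨N, hN⟩ :=
    (measure_A_tendsto.eventually_le_const (ENNReal.ofReal_pos.2 hη)).exists
  exact ⟨F N, ENNReal.toReal_le_of_le_ofReal hη.le hN⟩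

lemma isTightFunctional_pairingₗ [TopologicalSpace.SeparableSpace S] (μ : SignedMeasure S) :
    IsTightFunctional (pairingₗ μ) := by
  intro ε hε δ hδ
  obtain ⟨F, hF⟩ := exists_finset_measureReal_compl_thickening_le μ.totalVariation hε hδ
  refine ⟨F, fun f M hM hf hfF => ?_⟩
  calc |pairing μ f.1| ≤ M * μ.totalVariation.real (Metric.thickening δ (F : Set S))ᶜ :=
      abs_pairing_le_mul_totalVariation μ hf fun x hx => hfF x (Set.notMem_compl_iff.1 hx)
    _ ≤ ε * M := by rw [mul_comm ε]; gcongr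

lemma pairing_toSignedMeasure_sub (α β : Measure S) [IsFiniteMeasure α] [IsFiniteMeasure β]
    {f : S → ℝ} (hf : IsBL f) :
    pairing (α.toSignedMeasure - β.toSignedMeasure) f = ∫ x, f x ∂α - ∫ x, f x ∂β := by
  set s := α.toSignedMeasure - β.toSignedMeasure with hs
  have parts_add : s.toJordanDecomposition.posPart + β = s.toJordanDecomposition.negPart + α := by
    have jordan := s.toSignedMeasure_toJordanDecomposition
    rw [JordanDecomposition.toSignedMeasure, hs, sub_eq_sub_iff_add_eq_add, ← hs] at jordan
    rw [← Measure.toSignedMeasure_eq_toSignedMeasure_iff, Measure.toSignedMeasure_add,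
      Measure.toSignedMeasure_add, jordan, add_comm]
  have integral_eq := congrArg (fun m => ∫ x, f x ∂m) parts_add
  rw [integral_add_measure (hf.integrable _) (hf.integrable _),
    integral_add_measure (hf.integrable _) (hf.integrable _)] at integral_eq
  rw [pairing]
  linarith

lemma pairing_sub (s t : SignedMeasure S) {f : S → ℝ} (hf : IsBL f) :
    pairing (s - t) f = pairing s f - pairing t f := by
  have jordan_sub : s - t =
      (s.toJordanDecomposition.posPart + t.toJordanDecomposition.negPart).toSignedMeasure -
        (s.toJordanDecomposition.negPart + t.toJordanDecomposition.posPart).toSignedMeasure := by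
    conv_lhs => rw [← s.toSignedMeasure_toJordanDecomposition,
      ← t.toSignedMeasure_toJordanDecomposition]
    rw [JordanDecomposition.toSignedMeasure, JordanDecomposition.toSignedMeasure,
      Measure.toSignedMeasure_add, Measure.toSignedMeasure_add]
    abel
  rw [jordan_sub, pairing_toSignedMeasure_sub _ _ hf,
    integral_add_measure (hf.integrable _) (hf.integrable _),
    integral_add_measure (hf.integrable _) (hf.integrable _), pairing, pairing]
  ring

lemma tendsto_blDualNorm_sub {ι : Type*} {l : Filter ι} {μ : ι → SignedMeasure S}
    {ν : SignedMeasure S}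
    (h : TendstoUniformlyOn (fun i => (pairingₗ (μ i) : BL S → ℝ)) (pairingₗ ν) l (lipBall S 1)) :
    Tendsto (fun i => blDualNorm (μ i - ν)) l (𝓝 0) := by
  refine Metric.tendsto_nhds.2 fun ε hε => ?_
  filter_upwards [Metric.tendstoUniformlyOn_iff.1 h (ε / 2) (half_pos hε)] with i hi
  rw [Real.dist_0_eq_abs, abs_of_nonneg (blDualNorm_nonneg _)]
  refine (blDualNorm_le (half_pos hε).le fun f hf => ?_).trans_lt (half_lt_self hε)
  rw [pairing_sub _ _ f.2, abs_sub_comm]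
  exact (hi f hf).le

end Pairing

section DiscreteMeasure

variable {S : Type*} [MeasurableSpace S]

/-- The positive part of the discrete signed measure giving mass `a y` to each `y ∈ F`. -/
noncomputable def discretePos (F : Finset S) (a : S → ℝ) : FiniteMeasure S :=
  ∑ y ∈ F, (a y).toNNReal • ⟨Measure.dirac y, inferInstance⟩

lemma toMeasure_discretePos (F : Finset S) (a : S → ℝ) :
    (discretePos F a : Measure S) = ∑ y ∈ F, (a y).toNNReal • Measure.dirac y := by
  rw [discretePos, FiniteMeasure.toMeasure_sum]
  rfl

lemma discretePos_apply_le {F : Finset S} {a : S → ℝ} {T : Set S} (hT : MeasurableSet T) {ε : ℝ}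
    (h : ∀ A ⊆ F, (∀ y ∈ A, y ∈ T) → ∑ y ∈ A, |a y| ≤ ε) :
    (discretePos F a : Measure S) T ≤ ENNReal.ofReal ε := by
  classical
  calc (discretePos F a : Measure S) T = ∑ y ∈ F with y ∈ T, ENNReal.ofReal (a y) := by
        simp [toMeasure_discretePos, Measure.dirac_apply' _ hT, Finset.sum_filter, Set.indicator,
          ENNReal.ofReal]
    _ ≤ ∑ y ∈ F with y ∈ T, ENNReal.ofReal |a y| :=
      Finset.sum_le_sum fun y _ => ENNReal.ofReal_le_ofReal (le_abs_self _)
    _ = ENNReal.ofReal (∑ y ∈ F with y ∈ T, |a y|) :=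
      (ENNReal.ofReal_sum_of_nonneg fun _ _ => abs_nonneg _).symm
    _ ≤ ENNReal.ofReal ε := ENNReal.ofReal_le_ofReal <|
      h _ (Finset.filter_subset _ _) fun y hy => (Finset.mem_filter.1 hy).2

variable [PseudoMetricSpace S] [OpensMeasurableSpace S]

lemma integral_discretePos (F : Finset S) (a : S → ℝ) {f : S → ℝ} (hf : IsBL f) :
    ∫ x, f x ∂(discretePos F a : Measure S) = ∑ y ∈ F, max (a y) 0 * f y := by
  rw [toMeasure_discretePos, integral_finsetSum_measure fun y _ => hf.integrable _]
  refine Finset.sum_congr rfl fun y _ => ?_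
  rw [integral_smul_nnreal_measure, integral_dirac' _ _
    hf.2.choose_spec.continuous.measurable.stronglyMeasurable]
  rfl

lemma integral_discretePos_sub_integral_discretePos_neg (F : Finset S) (a : S → ℝ) {f : S → ℝ}
    (hf : IsBL f) :
    ∫ x, f x ∂(discretePos F a : Measure S) - ∫ x, f x ∂(discretePos F (-a) : Measure S) =
      ∑ y ∈ F, a y * f y := by
  rw [integral_discretePos F a hf, integral_discretePos F (-a) hf, ← Finset.sum_sub_distrib]
  simp [← sub_mul, max_zero_sub_max_neg_zero_eq_self]

end DiscreteMeasure

section Representation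

lemma isCompact_iInter_cthickening {X : Type*} [PseudoMetricSpace X] [CompleteSpace X] {r : ℕ → ℝ}
    (hr : Tendsto r atTop (𝓝 0)) (F : ℕ → Finset X) :
    IsCompact (⋂ j, Metric.cthickening (r j) (F j : Set X)) := by
  refine TotallyBounded.isCompact_of_isClosed (Metric.totallyBounded_iff.2 fun ε hε => ?_)
    (isClosed_iInter fun j => Metric.isClosed_cthickening)
  obtain ⟨j, hj⟩ := (hr.eventually_lt_const hε).exists
  refine ⟨F j, (F j).finite_toSet, fun x hx => ?_⟩
  rw [← Metric.thickening_eq_biUnion_ball]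
  exact Metric.cthickening_subset_thickening' hε hj _ (Set.mem_iInter.1 hx j)

lemma isTightMeasureSet_range_of_cthickening {X ι : Type*} [PseudoMetricSpace X] [CompleteSpace X]
    [MeasurableSpace X] {ν : ι → Measure X}
    (hν : ∀ ε > 0, ∀ δ > 0, ∃ G : Finset X, ∀ i,
      ν i (Metric.cthickening δ (G : Set X))ᶜ ≤ ENNReal.ofReal ε) :
    IsTightMeasureSet (Set.range ν) := by
  refine isTightMeasureSet_iff_exists_isCompact_measure_compl_le.2 fun ε hε => ?_
  obtain ⟨e, e_pos, e_sum⟩ := ENNReal.exists_pos_sum_of_countable hε.ne' ℕ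
  choose G hG using fun j : ℕ => hν (e j) (e_pos j) (1 / (j + 1)) (by positivity)
  refine ⟨_, isCompact_iInter_cthickening tendsto_one_div_add_atTop_nhds_zero_nat G, ?_⟩
  rintro _ ⟨i, rfl⟩
  rw [Set.compl_iInter]
  calc ν i (⋃ j : ℕ, (Metric.cthickening (1 / (j + 1)) (G j : Set X))ᶜ)
      ≤ ∑' j : ℕ, ν i (Metric.cthickening (1 / (j + 1)) (G j : Set X))ᶜ := measure_iUnion_le _
    _ ≤ ∑' j, (e j : ENNReal) := ENNReal.tsum_le_tsum fun j => by simpa using hG j i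
    _ ≤ ε := e_sum.le

lemma exists_isCompact_of_isTightMeasureSet {X ι : Type*} [TopologicalSpace X] [T2Space X]
    [NormalSpace X] [MeasurableSpace X] [BorelSpace X] {ν : ι → FiniteMeasure X} {C : ℝ≥0}
    (hC : ∀ i, (ν i).mass ≤ C) (hν : IsTightMeasureSet (Set.range fun i => (ν i : Measure X))) :
    ∃ 𝒦 : Set (FiniteMeasure X), IsCompact 𝒦 ∧ ∀ i, ν i ∈ 𝒦 := by
  obtain ⟨e, -, e_pos, e_tendsto⟩ := exists_seq_strictAnti_tendsto (0 : ℝ≥0)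
  choose K hK hνK using fun n => isTightMeasureSet_iff_exists_isCompact_measure_compl_le.1 hν (e n)
    (ENNReal.coe_pos.2 (e_pos n))
  refine ⟨_, isCompact_setOfPred_finiteMeasure_mass_le_compl_isCompact_le C e_tendsto hK
    (Or.inl inferInstance), fun i => ⟨hC i, fun n => ?_⟩⟩
  rw [← ENNReal.coe_le_coe, FiniteMeasure.ennreal_coeFn_eq_coeFn_toMeasure]
  exact hνK n _ ⟨i, rfl⟩

variable {S : Type*} [MetricSpace S] [CompleteSpace S] [MeasurableSpace S] [BorelSpace S] {C : ℝ}

lemma exists_tendsto_discretePos {F : ℕ → Finset S} {a : ℕ → S → ℝ}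
    (hmass : ∀ k, ∑ y ∈ F k, |a k y| ≤ C)
    (htail : ∀ ε > 0, ∀ δ > 0, ∃ G : Finset S, ∀ k, ∀ A ⊆ F k,
      (∀ y ∈ A, y ∉ Metric.cthickening δ (G : Set S)) → ∑ y ∈ A, |a k y| ≤ ε)
    (𝒰 : Ultrafilter ℕ) :
    ∃ α, Tendsto (fun k => discretePos (F k) (a k)) 𝒰 (𝓝 α) := by
  have tight : IsTightMeasureSet (Set.range fun k => (discretePos (F k) (a k) : Measure S)) := by
    refine isTightMeasureSet_range_of_cthickening fun ε hε δ hδ => ?_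
    obtain ⟨G, hG⟩ := htail ε hε δ hδ
    exact ⟨G, fun k =>
      discretePos_apply_le Metric.isClosed_cthickening.measurableSet.compl (hG k)⟩
  have mass_le k : (discretePos (F k) (a k)).mass ≤ C.toNNReal := by
    rw [← ENNReal.coe_le_coe, FiniteMeasure.ennreal_mass]
    exact discretePos_apply_le .univ fun A hA _ =>
      (Finset.sum_le_sum_of_subset_of_nonneg hA fun _ _ _ => abs_nonneg _).trans (hmass k)
  obtain ⟨𝒦, h𝒦, mem_𝒦⟩ := exists_isCompact_of_isTightMeasureSet mass_le tight
  obtain ⟨α, -, hα⟩ := h𝒦.ultrafilter_le_nhds (𝒰.map fun k => discretePos (F k) (a k))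
    (le_principal_iff.2 (mem_map.2 (univ_mem' mem_𝒦)))
  exact ⟨α, hα⟩

lemma IsTightFunctional.exists_eq_integral_sub_integral {φ : BL S →ₗ[ℝ] ℝ}
    (hφ : IsTightFunctional φ) (hC : SupBounded C φ) :
    ∃ α β : FiniteMeasure S, ∀ f : BL S,
      φ f = ∫ x, f.1 x ∂(α : Measure S) - ∫ x, f.1 x ∂(β : Measure S) := by
  obtain ⟨F, a, hmass, htail, hlim⟩ := hφ.exists_discretization hC
  obtain ⟨α, hα⟩ := exists_tendsto_discretePos hmass htail (hyperfilter ℕ)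
  obtain ⟨β, hβ⟩ := exists_tendsto_discretePos (a := -a) (by simpa using hmass)
    (by simpa using htail) (hyperfilter ℕ)
  refine ⟨α, β, fun f => ?_⟩
  obtain ⟨⟨M, hM⟩, K, hK⟩ := f.2
  let g : BoundedContinuousFunction S ℝ := .ofNormedAddCommGroup f.1 hK.continuous M hM
  have integral_tendsto := (FiniteMeasure.tendsto_iff_forall_integral_tendsto.1 hα g).sub
    (FiniteMeasure.tendsto_iff_forall_integral_tendsto.1 hβ g)
  refine tendsto_nhds_unique ((hlim f).mono_left Nat.hyperfilter_le_atTop) ?_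
  exact integral_tendsto.congr fun k =>
    integral_discretePos_sub_integral_discretePos_neg (F k) (a k) f.2

end Representation

/-- **Schur-like property for measures.** If a sequence of finite signed Borel measures on a
complete separable metric space is bounded in total variation norm and `⟨μ_n, f⟩` converges for
every bounded Lipschitz `f`, then `μ_n` converges to some `μ` in dual bounded Lipschitz norm. -/
theorem schur_like_property {S : Type*} [MetricSpace S] [CompleteSpace S]
    [TopologicalSpace.SeparableSpace S] [MeasurableSpace S] [BorelSpace S]
    (μ : ℕ → SignedMeasure S)
    (hTV : ∃ C : ℝ, ∀ n, tvNorm (μ n) ≤ C)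
    (hconv : ∀ f : S → ℝ, IsBL f →
      ∃ l : ℝ, Tendsto (fun n => pairing (μ n) f) atTop (𝓝 l)) :
    ∃ ν : SignedMeasure S, Tendsto (fun n => blDualNorm (μ n - ν)) atTop (𝓝 0) := by
  obtain ⟨C, hC⟩ := hTV
  have bounded n : SupBounded C (pairingₗ (μ n)) := supBounded_pairingₗ (hC n)
  have small : EquiSmallOnVanishing fun n => pairingₗ (μ n) :=
    .of_forall_tendsto bounded
      (fun n => (isTightFunctional_pairingₗ (μ n)).equiSmallOnVanishing (bounded n))
      fun f => hconv f.1 f.2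
  choose limit hlimit using fun f : BL S => hconv f.1 f.2
  let φ : BL S →ₗ[ℝ] ℝ :=
    linearMapOfTendsto limit (fun n => pairingₗ (μ n)) (tendsto_pi_nhds.2 hlimit)
  have hφ f : Tendsto (fun n => pairingₗ (μ n) f) atTop (𝓝 (φ f)) := hlimit f
  have φ_bounded : SupBounded C φ := .of_tendsto bounded hφ
  have φ_tight : IsTightFunctional φ := (small.of_tendsto hφ).isTightFunctional φ_bounded
  obtain ⟨α, β, hαβ⟩ := φ_tight.exists_eq_integral_sub_integral φ_bounded
  let ν := (α : Measure S).toSignedMeasure - (β : Measure S).toSignedMeasure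
  have φ_eq : φ = pairingₗ ν := LinearMap.ext fun f =>
    (hαβ f).trans (pairing_toSignedMeasure_sub _ _ f.2).symm
  exact ⟨ν, tendsto_blDualNorm_sub <| φ_eq ▸ small.tendstoUniformlyOn bounded hφ 1⟩
end

section
/- Let (S,d) be a complete separable metric space and let (μ_n) be a sequence of finite positive Borel measures on S such that for every f ∈ BL(S) the sequence ∫_S f dμ_n converges in ℝ. Then ∫_S f dμ_n converges for every bounded continuous function f : S → ℝ, and there exists a finite positive Borel measure μ on S such that ‖μ_n − μ‖*_BL → 0 as n → ∞. -/
open MeasureTheory Filter Topology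

/-!
Equip the set of `K`-Lipschitz functions bounded by `1` with pointwise convergence; it is compact,
hence Baire, and integration against a finite (hence tight) measure is continuous on it. A sequence
of continuous functions that converges pointwise on a Baire space is equicontinuous at some point,
so there is a function `f` and a finite set `F` such that changing `f` off `F` barely changes
`∫ f dμ_n`, for all `n` at once. Moving `f` up to `1` and down to `-1` away from `F` shows that
`μ_n` puts little mass away from `F`. As `K` is arbitrary, the sequence is tight, and by the
Prokhorov theorem it has a weak limit `ν`. Tightness makes the functionals `f ↦ ∫ f dμ_n`
equicontinuous on the whole compact set, so their pointwise convergence to `f ↦ ∫ f dν` is uniform,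
which is convergence in the dual bounded Lipschitz norm.
-/

open scoped NNReal ENNReal

-- With `E N = {x | ∀ n ≥ N, dist (Φ n x) (Φ N x) ≤ ε / 4}`, the union of the interiors of the
-- closed sets `E N` is open and dense, and near a point of `interior (E N)` the whole sequence
-- oscillates no more than `Φ 0, …, Φ N` do, up to `ε / 2`.
theorem eventually_residual_eventually_dist_lt {X Y : Type*} [TopologicalSpace X] [BaireSpace X]
    [PseudoMetricSpace Y] {Φ : ℕ → X → Y} (hΦ : ∀ n, Continuous (Φ n))
    (hcauchy : ∀ x, CauchySeq fun n => Φ n x) {ε : ℝ} (hε : 0 < ε) :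
    ∀ᶠ x in residual X, ∀ᶠ y in 𝓝 x, ∀ n, dist (Φ n x) (Φ n y) < ε := by
  let E : ℕ → Set X := fun N => {x | ∀ n ≥ N, dist (Φ n x) (Φ N x) ≤ ε / 4}
  have isClosed_E : ∀ N, IsClosed (E N) := fun N => by
    simp only [E, Set.ofPred_forall]
    exact isClosed_iInter fun n => isClosed_iInter fun _ =>
      isClosed_le ((hΦ n).dist (hΦ N)) continuous_const
  have iUnion_E : ⋃ N, E N = Set.univ := Set.eq_univ_of_forall fun x => by
    obtain ⟨N, hN⟩ := Metric.cauchySeq_iff'.1 (hcauchy x) (ε / 4) (by positivity)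
    exact Set.mem_iUnion.2 ⟨N, fun n hn => (hN n hn).le⟩
  have interior_mem : ⋃ N, interior (E N) ∈ residual X :=
    residual_of_dense_open (isOpen_iUnion fun _ => isOpen_interior)
      (dense_iUnion_interior_of_closed isClosed_E iUnion_E)
  filter_upwards [interior_mem] with x hx
  obtain ⟨N, hxN⟩ := Set.mem_iUnion.1 hx
  have initial : ∀ᶠ y in 𝓝 x, ∀ m ∈ Set.Iic N, dist (Φ m y) (Φ m x) < ε / 4 :=
    (Set.finite_Iic N).eventually_all.2 fun m _ =>
      Metric.tendsto_nhds.1 ((hΦ m).tendsto x) (ε / 4) (by positivity)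
  filter_upwards [mem_interior_iff_mem_nhds.1 hxN, initial] with y hyN hy n
  rw [dist_comm]
  rcases le_total n N with hnN | hNn
  · linarith [hy n hnN]
  · calc dist (Φ n y) (Φ n x)
        ≤ dist (Φ n y) (Φ N y) + dist (Φ N y) (Φ N x) + dist (Φ N x) (Φ n x) :=
          dist_triangle4 _ _ _ _
      _ < ε := by
          rw [dist_comm (Φ N x)]
          linarith [interior_subset hxN n hNn, hyN n hNn, hy N Set.self_mem_Iic]

theorem eventually_residual_equicontinuousAt {X Y : Type*} [TopologicalSpace X] [BaireSpace X]
    [PseudoMetricSpace Y] {Φ : ℕ → X → Y} (hΦ : ∀ n, Continuous (Φ n))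
    (hcauchy : ∀ x, CauchySeq fun n => Φ n x) :
    ∀ᶠ x in residual X, EquicontinuousAt Φ x := by
  have oscillation : ∀ᶠ x in residual X, ∀ k : ℕ, ∀ᶠ y in 𝓝 x, ∀ n,
      dist (Φ n x) (Φ n y) < 1 / ((k : ℝ) + 1) :=
    eventually_countable_forall.2 fun k =>
      eventually_residual_eventually_dist_lt hΦ hcauchy Nat.one_div_pos_of_nat
  filter_upwards [oscillation] with x hx
  rw [Metric.equicontinuousAt_iff_right]
  intro ε hε
  obtain ⟨k, hk⟩ := exists_nat_one_div_lt hε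
  filter_upwards [hx k] with y hy n using (hy n).trans hk

theorem isCompact_iInter_cthickening_s1 {S : Type*} [PseudoMetricSpace S] [CompleteSpace S]
    {F : ℕ → Set S} (hF : ∀ k, (F k).Finite) {δ : ℕ → ℝ} (hδ : Tendsto δ atTop (𝓝 0)) :
    IsCompact (⋂ k, Metric.cthickening (δ k) (F k)) := by
  rw [isCompact_iff_totallyBounded_isComplete]
  refine ⟨Metric.totallyBounded_iff.2 fun r hr => ?_,
    (isClosed_iInter fun _ => Metric.isClosed_cthickening).isComplete⟩
  obtain ⟨k, hk⟩ := (hδ.eventually_lt_const hr).exists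
  refine ⟨F k, hF k, ?_⟩
  rw [← Metric.thickening_eq_biUnion_ball]
  exact (Set.iInter_subset _ k).trans (Metric.cthickening_subset_thickening' hr hk _)

theorem isTightMeasureSet_of_forall_exists_finite_thickening {S : Type*} [PseudoMetricSpace S]
    [CompleteSpace S] [MeasurableSpace S] {s : Set (Measure S)}
    (h : ∀ ε : ℝ≥0∞, 0 < ε → ∀ δ : ℝ, 0 < δ →
      ∃ F : Set S, F.Finite ∧ ∀ P ∈ s, P (Metric.thickening δ F)ᶜ ≤ ε) :
    IsTightMeasureSet s := by
  refine isTightMeasureSet_iff_exists_isCompact_measure_compl_le.2 fun ε hε => ?_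
  obtain ⟨ε', hε', sum_ε'⟩ := ENNReal.exists_pos_sum_of_countable' hε.ne' ℕ
  let δ : ℕ → ℝ := fun k => 1 / ((k : ℝ) + 1)
  choose F hF hPF using fun k => h (ε' k) (hε' k) (δ k) Nat.one_div_pos_of_nat
  refine ⟨⋂ k, Metric.cthickening (δ k) (F k),
    isCompact_iInter_cthickening_s1 hF tendsto_one_div_add_atTop_nhds_zero_nat, fun P hP => ?_⟩
  calc P (⋂ k, Metric.cthickening (δ k) (F k))ᶜ
      ≤ P (⋃ k, (Metric.thickening (δ k) (F k))ᶜ) := by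
        rw [Set.compl_iInter]
        exact measure_mono <| Set.iUnion_mono fun k =>
          Set.compl_subset_compl.2 (Metric.thickening_subset_cthickening _ _)
    _ ≤ ∑' k, P (Metric.thickening (δ k) (F k))ᶜ := measure_iUnion_le _
    _ ≤ ∑' k, ε' k := ENNReal.tsum_le_tsum fun k => hPF k P hP
    _ ≤ ε := sum_ε'.le

theorem exists_finite_measureReal_compl_thickening_le_of_isTightMeasureSet {S ι : Type*}
    [PseudoMetricSpace S] [MeasurableSpace S] {P : ι → Measure S}
    (h : IsTightMeasureSet (Set.range P)) {ε δ : ℝ} (hε : 0 < ε) (hδ : 0 < δ) :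
    ∃ F : Set S, F.Finite ∧ ∀ i, (P i).real (Metric.thickening δ F)ᶜ ≤ ε := by
  obtain ⟨C, hC, hPC⟩ := isTightMeasureSet_iff_exists_isCompact_measure_compl_le.1 h
    (ENNReal.ofReal ε) (ENNReal.ofReal_pos.2 hε)
  obtain ⟨F, -, hF, hCF⟩ := hC.finite_cover_balls hδ
  rw [← Metric.thickening_eq_biUnion_ball] at hCF
  exact ⟨F, hF, fun i => ENNReal.toReal_le_of_le_ofReal hε.le <|
    (measure_mono (Set.compl_subset_compl.2 hCF)).trans (hPC _ ⟨i, rfl⟩)⟩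

theorem isCompact_closure_of_isTightMeasureSet_of_mass_le {S : Type*} [TopologicalSpace S]
    [T4Space S] [MeasurableSpace S] [BorelSpace S] {s : Set (FiniteMeasure S)} {M : ℝ≥0}
    (hM : ∀ P ∈ s, P.mass ≤ M)
    (htight : IsTightMeasureSet ((fun P : FiniteMeasure S => (P : Measure S)) '' s)) :
    IsCompact (closure s) := by
  obtain ⟨u, -, u_pos, hu⟩ := exists_seq_strictAnti_tendsto (0 : ℝ≥0)
  choose C hC hsC using fun k => isTightMeasureSet_iff_exists_isCompact_measure_compl_le.1 htight
    (u k) (ENNReal.coe_pos.2 (u_pos k))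
  refine (isCompact_setOfPred_finiteMeasure_mass_le_compl_isCompact_le M hu hC
    (Or.inl inferInstance)).closure_of_subset fun P hP => ⟨hM P hP, fun k => ?_⟩
  rw [← ENNReal.coe_le_coe, FiniteMeasure.ennreal_coeFn_eq_coeFn_toMeasure]
  exact hsC k P ⟨P, hP, rfl⟩

theorem exists_mass_le_of_tendsto_integral {S : Type*} [MeasurableSpace S]
    {P : ℕ → FiniteMeasure S}
    (hconv : ∃ l : ℝ, Tendsto (fun n => ∫ _, (1 : ℝ) ∂(P n : Measure S)) atTop (𝓝 l)) :
    ∃ M : ℝ≥0, ∀ n, (P n).mass ≤ M := by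
  obtain ⟨l, hl⟩ := hconv
  obtain ⟨M, hM⟩ := hl.bddAbove_range
  refine ⟨M.toNNReal, fun n => NNReal.le_toNNReal_of_coe_le ?_⟩
  calc ((P n).mass : ℝ) = ∫ _, (1 : ℝ) ∂(P n : Measure S) := by
        rw [integral_const, smul_eq_mul, mul_one]; rfl
    _ ≤ M := hM ⟨n, rfl⟩

/-- The `K`-Lipschitz functions `S → ℝ` with values in `[-1, 1]`. Its coercion to a type carries
the topology of pointwise convergence, for which it is compact. -/
def blBall (S : Type*) [PseudoMetricSpace S] (K : ℝ≥0) : Set (S → ℝ) :=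
  {f | (∀ x, |f x| ≤ 1) ∧ LipschitzWith K f}

namespace blBall

section Lattice

variable {S : Type*} [PseudoMetricSpace S] {K : ℝ≥0} {f g : S → ℝ}

theorem isCompact (S : Type*) [PseudoMetricSpace S] (K : ℝ≥0) : IsCompact (blBall S K) := by
  have eq_inter : blBall S K =
      Set.univ.pi (fun _ => Set.Icc (-1) 1) ∩ {f | LipschitzWith K f} := by
    ext f
    simp only [blBall, Set.mem_inter_iff, Set.mem_univ_pi, Set.mem_Icc, Set.mem_ofPred_eq, abs_le]
  rw [eq_inter]
  exact (isCompact_univ_pi fun _ => isCompact_Icc).inter_right (isClosed_setOfPred_lipschitzWith K)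

instance : CompactSpace (blBall S K) := isCompact_iff_compactSpace.1 (isCompact S K)

theorem one_mem : (fun _ => 1) ∈ blBall S K :=
  ⟨fun _ => abs_one.le, LipschitzWith.const' 1⟩

instance : Nonempty (blBall S K) := ⟨⟨_, one_mem⟩⟩

theorem neg_mem (hf : f ∈ blBall S K) : (fun x => -f x) ∈ blBall S K :=
  ⟨fun x => (abs_neg (f x)).trans_le (hf.1 x), hf.2.neg⟩

theorem max_mem (hf : f ∈ blBall S K) (hg : g ∈ blBall S K) :
    (fun x => max (f x) (g x)) ∈ blBall S K :=
  ⟨fun x => abs_max_le_max_abs_abs.trans (max_le (hf.1 x) (hg.1 x)),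
    by simpa only [max_self] using hf.2.max hg.2⟩

theorem min_mem (hf : f ∈ blBall S K) (hg : g ∈ blBall S K) :
    (fun x => min (f x) (g x)) ∈ blBall S K :=
  ⟨fun x => abs_min_le_max_abs_abs.trans (max_le (hf.1 x) (hg.1 x)),
    by simpa only [max_self] using hf.2.min hg.2⟩

theorem mem_of_add_le_one {C : ℝ} (hC : ∀ x, |f x| ≤ C) (hK : LipschitzWith K f)
    (hCK : C + K ≤ 1) : f ∈ blBall S 1 := by
  refine ⟨fun x => (hC x).trans (by linarith [K.coe_nonneg]),
    LipschitzWith.of_dist_le_mul fun x y => (hK.dist_le_mul x y).trans ?_⟩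
  have C_nonneg : 0 ≤ C := (abs_nonneg _).trans (hC x)
  gcongr
  exact NNReal.coe_le_one.1 (by linarith)

theorem thickenedIndicator_mem {δ : ℝ} (hδ : 0 < δ) (F : Set S) :
    (fun x => (thickenedIndicator hδ F x : ℝ)) ∈ blBall S δ.toNNReal⁻¹ :=
  ⟨fun x => by simpa using thickenedIndicator_le_one hδ F x,
    lipschitzWith_thickenedIndicator hδ F⟩

theorem exists_eq_neg_one_eq_one {δ : ℝ} (hδ : 0 < δ) (F : Set S) :
    ∃ g ∈ blBall S (2 * δ.toNNReal⁻¹),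
      (∀ x ∈ F, g x = -1) ∧ ∀ x ∉ Metric.thickening δ F, g x = 1 := by
  refine ⟨fun x => 1 - 2 * (thickenedIndicator hδ F x : ℝ), ⟨fun x => ?_, ?_⟩,
    fun x hx => ?_, fun x hx => ?_⟩
  · have := (thickenedIndicator hδ F x).coe_nonneg
    have := NNReal.coe_le_one.2 (thickenedIndicator_le_one hδ F x)
    exact abs_le.2 ⟨by linarith, by linarith⟩
  · refine LipschitzWith.of_dist_le_mul fun x y => ?_
    have := (thickenedIndicator_mem hδ F).2.dist_le_mul x y
    rw [dist_sub_left, ← smul_eq_mul, ← smul_eq_mul, dist_smul₀, NNReal.coe_mul, mul_assoc]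
    simpa using this
  · simp only [thickenedIndicator_one hδ F hx, NNReal.coe_one]
    norm_num
  · simp only [thickenedIndicator_zero hδ F hx, NNReal.coe_zero, mul_zero, sub_zero]

theorem abs_sub_le_of_mem_thickening (hf : f ∈ blBall S K) (hg : g ∈ blBall S K) {F : Set S}
    {δ η : ℝ} (hF : ∀ z ∈ F, |f z - g z| ≤ η) {x : S} (hx : x ∈ Metric.thickening δ F) :
    |f x - g x| ≤ η + 2 * (K * δ) := by
  obtain ⟨z, hz, hxz⟩ := Metric.mem_thickening_iff.1 hx
  have lipschitz_bound : ∀ h ∈ blBall S K, |h x - h z| ≤ K * δ := fun h hh =>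
    (hh.2.dist_le_mul x z).trans (by gcongr)
  calc |f x - g x| = |(f x - f z) + (f z - g z) - (g x - g z)| := by ring_nf
    _ ≤ |f x - f z| + |f z - g z| + |g x - g z| :=
        (abs_sub _ _).trans (by gcongr; exact abs_add_le _ _)
    _ ≤ η + 2 * (K * δ) := by linarith [lipschitz_bound f hf, lipschitz_bound g hg, hF z hz]

end Lattice

section Integral

variable {S : Type*} [PseudoMetricSpace S] [MeasurableSpace S] [OpensMeasurableSpace S]
  {K : ℝ≥0} {f g : S → ℝ}

theorem integrable (hf : f ∈ blBall S K) (P : Measure S) [IsFiniteMeasure P] : Integrable f P :=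
  .of_bound hf.2.continuous.measurable.aestronglyMeasurable 1 (.of_forall hf.1)

theorem tendsto_integral {ι : Type*} {l : Filter ι} {P : ι → FiniteMeasure S}
    {ν : FiniteMeasure S} (hP : Tendsto P l (𝓝 ν)) (hf : f ∈ blBall S K) :
    Tendsto (fun i => ∫ x, f x ∂(P i : Measure S)) l (𝓝 (∫ x, f x ∂(ν : Measure S))) :=
  FiniteMeasure.tendsto_iff_forall_integral_tendsto.1 hP
    (.ofNormedAddCommGroup f hf.2.continuous 1 hf.1)

theorem abs_integral_sub_integral_le (hf : f ∈ blBall S K) (hg : g ∈ blBall S K)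
    (P : Measure S) [IsFiniteMeasure P] {A : Set S} (hA : MeasurableSet A) {c : ℝ} (hc : 0 ≤ c)
    (hfg : ∀ x ∈ A, |f x - g x| ≤ c) :
    |∫ x, f x ∂P - ∫ x, g x ∂P| ≤ c * P.real Set.univ + 2 * P.real Aᶜ := by
  have integrable_indicator : Integrable (Aᶜ.indicator fun _ => (2 : ℝ)) P :=
    (integrable_const _).indicator hA.compl
  have pointwise : ∀ x, |f x - g x| ≤ c + Aᶜ.indicator (fun _ => 2) x := fun x => by
    by_cases hx : x ∈ A
    · simpa [hx] using hfg x hx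
    · have := (abs_sub (f x) (g x)).trans (add_le_add (hf.1 x) (hg.1 x))
      simp only [Set.indicator_of_mem (Set.mem_compl hx)]
      linarith
  calc |∫ x, f x ∂P - ∫ x, g x ∂P| = |∫ x, (f x - g x) ∂P| := by
        rw [integral_sub (integrable hf P) (integrable hg P)]
    _ ≤ ∫ x, |f x - g x| ∂P := abs_integral_le_integral_abs
    _ ≤ ∫ x, (c + Aᶜ.indicator (fun _ => 2) x) ∂P :=
        integral_mono ((integrable hf P).sub (integrable hg P)).abs
          ((integrable_const _).add integrable_indicator) pointwise
    _ = c * P.real Set.univ + 2 * P.real Aᶜ := by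
        rw [integral_add (integrable_const _) integrable_indicator,
          integral_indicator_const _ hA.compl, integral_const, smul_eq_mul, smul_eq_mul]
        ring

theorem equicontinuous_integral {ι : Type*} {P : ι → FiniteMeasure S} {M : ℝ≥0}
    (hM : ∀ i, (P i).mass ≤ M)
    (htight : IsTightMeasureSet (Set.range fun i => (P i : Measure S))) (K : ℝ≥0) :
    Equicontinuous fun i (f : blBall S K) => ∫ x, f.1 x ∂(P i : Measure S) := by
  intro f
  refine Metric.equicontinuousAt_iff_right.2 fun ε hε => ?_
  let η : ℝ := ε / (4 * (M + 1))
  let δ : ℝ := η / (2 * (K + 1))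
  have hη : 0 < η := by positivity
  have hδ : 0 < δ := by positivity
  obtain ⟨F, hF, hPF⟩ := exists_finite_measureReal_compl_thickening_le_of_isTightMeasureSet htight
    (show 0 < ε / 8 by positivity) hδ
  have near_on_F : ∀ᶠ g : blBall S K in 𝓝 f, ∀ z ∈ F, |f.1 z - g.1 z| < η :=
    hF.eventually_all.2 fun z _ => by
      have tendsto_eval : Tendsto (fun g : blBall S K => g.1 z) (𝓝 f) (𝓝 (f.1 z)) :=
        ((continuous_apply z).comp continuous_subtype_val).tendsto f
      simpa only [Real.dist_eq, abs_sub_comm] using Metric.tendsto_nhds.1 tendsto_eval η hη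
  filter_upwards [near_on_F] with g hg i
  have hKδ : 2 * (K * δ) ≤ η := by
    have : 2 * ((K + 1) * δ) = η := by simp only [δ]; field_simp
    linarith
  have hηM : η * (M + 1) = ε / 4 := by simp only [η]; field_simp
  calc |∫ x, f.1 x ∂(P i : Measure S) - ∫ x, g.1 x ∂(P i : Measure S)|
      ≤ 2 * η * (P i : Measure S).real Set.univ
          + 2 * (P i : Measure S).real (Metric.thickening δ F)ᶜ :=
        abs_integral_sub_integral_le f.2 g.2 _ Metric.isOpen_thickening.measurableSet
          (by positivity) fun x hx => (abs_sub_le_of_mem_thickening f.2 g.2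
            (fun z hz => (hg z hz).le) hx).trans (by linarith)
    _ ≤ 2 * η * M + 2 * (ε / 8) := by
        gcongr
        · exact hM i
        · exact hPF i
    _ < ε := by linarith

theorem tendstoUniformly_integral {ι : Type*} {l : Filter ι} {P : ι → FiniteMeasure S}
    {M : ℝ≥0} (hM : ∀ i, (P i).mass ≤ M)
    (htight : IsTightMeasureSet (Set.range fun i => (P i : Measure S)))
    {ν : FiniteMeasure S} (hν : Tendsto P l (𝓝 ν)) (K : ℝ≥0) :
    TendstoUniformly (fun i (f : blBall S K) => ∫ x, f.1 x ∂(P i : Measure S))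
      (fun f => ∫ x, f.1 x ∂(ν : Measure S)) l :=
  UniformFun.tendsto_iff_tendstoUniformly.1 <|
    ((equicontinuous_integral hM htight K).tendsto_uniformFun_iff_pi l _).2 <|
      tendsto_pi_nhds.2 fun f => tendsto_integral hν f.2

theorem two_mul_measureReal_le_integral_max_sub_integral_min (hf : f ∈ blBall S K)
    (hg : g ∈ blBall S K) (P : Measure S) [IsFiniteMeasure P] {A : Set S} (hA : MeasurableSet A)
    (hgA : ∀ x ∈ A, g x = 1) :
    2 * P.real A ≤ ∫ x, max (f x) (g x) ∂P - ∫ x, min (f x) (-g x) ∂P := by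
  have integrable_max := integrable (max_mem hf hg) P
  have integrable_min := integrable (min_mem hf (neg_mem hg)) P
  calc 2 * P.real A = ∫ x, A.indicator (fun _ => 2) x ∂P := by
        rw [integral_indicator_const _ hA, smul_eq_mul, mul_comm]
    _ ≤ ∫ x, (max (f x) (g x) - min (f x) (-g x)) ∂P := by
        refine integral_mono ((integrable_const _).indicator hA)
          (integrable_max.sub integrable_min) fun x => Set.indicator_apply_le' (fun hx => ?_)
            fun _ => ?_
        · linarith [hgA x hx, le_max_right (f x) (g x), min_le_right (f x) (-g x)]
        · linarith [le_max_left (f x) (g x), min_le_left (f x) (-g x)]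
    _ = ∫ x, max (f x) (g x) ∂P - ∫ x, min (f x) (-g x) ∂P :=
        integral_sub integrable_max integrable_min

-- For a cutoff `g` going from `-1` on `F` to `1` off its `δ`-thickening, both `max f g` and
-- `min f (-g)` agree with `f` on `F`, while their difference is `2` off the thickening.
theorem exists_finite_measureReal_compl_thickening_le_of_equicontinuousAt {ι : Type*}
    {P : ι → FiniteMeasure S} {δ : ℝ} (hδ : 0 < δ) {f : blBall S (2 * δ.toNNReal⁻¹)}
    (hf : EquicontinuousAt
      (fun i (f : blBall S (2 * δ.toNNReal⁻¹)) => ∫ x, f.1 x ∂(P i : Measure S)) f)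
    {ε : ℝ} (hε : 0 < ε) :
    ∃ F : Set S, F.Finite ∧ ∀ i, (P i : Measure S).real (Metric.thickening δ F)ᶜ ≤ ε := by
  have near := Metric.equicontinuousAt_iff_right.1 hf ε hε
  rw [nhds_subtype, eventually_comap, nhds_pi] at near
  obtain ⟨F, hF, t, ht, hsub⟩ := Filter.mem_pi.1 near
  have dist_lt : ∀ h : blBall S (2 * δ.toNNReal⁻¹), (∀ x ∈ F, h.1 x = f.1 x) → ∀ i,
      |∫ x, f.1 x ∂(P i : Measure S) - ∫ x, h.1 x ∂(P i : Measure S)| < ε := fun h hh i =>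
    hsub (fun x hx => by rw [hh x hx]; exact mem_of_mem_nhds (ht x)) h rfl i
  obtain ⟨g, hg, g_F, g_compl⟩ := exists_eq_neg_one_eq_one hδ F
  refine ⟨F, hF, fun i => ?_⟩
  have hu := max_mem f.2 hg
  have hv := min_mem f.2 (neg_mem hg)
  have u_lt := dist_lt ⟨_, hu⟩ (fun x hx => max_eq_left <| by
    rw [g_F x hx]; exact (abs_le.1 (f.2.1 x)).1) i
  have v_lt := dist_lt ⟨_, hv⟩ (fun x hx => min_eq_left <| by
    rw [g_F x hx, neg_neg]; exact (abs_le.1 (f.2.1 x)).2) i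
  have integral_ge := two_mul_measureReal_le_integral_max_sub_integral_min f.2 hg (P i)
    Metric.isOpen_thickening.measurableSet.compl g_compl
  linarith [(abs_lt.1 u_lt).1, (abs_lt.1 v_lt).2]

end Integral

section BorelSpace

variable {S : Type*} [PseudoMetricSpace S] [MeasurableSpace S] [BorelSpace S]

theorem ext_of_forall_integral_eq {P Q : Measure S} [IsFiniteMeasure P]
    [IsFiniteMeasure Q] (h : ∀ K, ∀ f ∈ blBall S K, ∫ x, f x ∂P = ∫ x, f x ∂Q) : P = Q := by
  have eq_of_isClosed : ∀ F : Set S, IsClosed F → P F = Q F := fun F hF => by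
    have δ_pos : ∀ n : ℕ, (0 : ℝ) < 1 / ((n : ℝ) + 1) := fun _ => Nat.one_div_pos_of_nat
    have tendsto_measureReal : ∀ (ρ : Measure S) [IsFiniteMeasure ρ],
        Tendsto (fun n => ∫ x, (thickenedIndicator (δ_pos n) F x : ℝ) ∂ρ) atTop (𝓝 (ρ.real F)) :=
      fun ρ _ => tendsto_integral_thickenedIndicator_of_isClosed ρ hF δ_pos
        tendsto_one_div_add_atTop_nhds_zero_nat
    exact (measureReal_eq_measureReal_iff).1 <| tendsto_nhds_unique (tendsto_measureReal P) <|
      (tendsto_measureReal Q).congr fun n => (h _ _ (thickenedIndicator_mem (δ_pos n) F)).symm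
  exact ext_of_generate_finite _
    (BorelSpace.measurable_eq.trans borel_eq_generateFrom_isClosed) isPiSystem_isClosed
    eq_of_isClosed (eq_of_isClosed _ isClosed_univ)

theorem continuous_integral [CompleteSpace S] [SecondCountableTopology S]
    (P : FiniteMeasure S) (K : ℝ≥0) :
    Continuous fun f : blBall S K => ∫ x, f.1 x ∂(P : Measure S) :=
  (equicontinuous_integral (P := fun _ : Unit => P) (fun _ => le_rfl)
    (by simpa only [Set.range_const] using isTightMeasureSet_singleton) K).continuous ()

theorem isTightMeasureSet_range_of_tendsto_integral [CompleteSpace S] [SecondCountableTopology S]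
    {P : ℕ → FiniteMeasure S} (hconv : ∀ K, ∀ f ∈ blBall S K,
      ∃ l : ℝ, Tendsto (fun n => ∫ x, f x ∂(P n : Measure S)) atTop (𝓝 l)) :
    IsTightMeasureSet (Set.range fun n => (P n : Measure S)) := by
  refine isTightMeasureSet_of_forall_exists_finite_thickening fun ε hε δ hδ => ?_
  obtain ⟨ε', ε'_pos, hε'⟩ := ENNReal.lt_iff_exists_nnreal_btwn.1 hε
  obtain ⟨f, hf⟩ := (dense_of_mem_residual <| eventually_residual_equicontinuousAt
    (fun n => continuous_integral (P n) (2 * δ.toNNReal⁻¹))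
    fun f => (hconv _ f.1 f.2).elim fun _ hl => hl.cauchySeq).nonempty
  obtain ⟨F, hF, hPF⟩ := exists_finite_measureReal_compl_thickening_le_of_equicontinuousAt hδ hf
    (NNReal.coe_pos.2 (ENNReal.coe_pos.1 ε'_pos))
  refine ⟨F, hF, Set.forall_mem_range.2 fun n => ?_⟩
  calc (P n : Measure S) (Metric.thickening δ F)ᶜ
      = ENNReal.ofReal ((P n : Measure S).real (Metric.thickening δ F)ᶜ) :=
        (ofReal_measureReal).symm
    _ ≤ ENNReal.ofReal ε' := ENNReal.ofReal_le_ofReal (hPF n)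
    _ ≤ ε := ENNReal.ofReal_coe_nnreal.trans_le hε'.le

end BorelSpace

theorem exists_tendsto_of_isTightMeasureSet {S ι : Type*} [MetricSpace S] [MeasurableSpace S]
    [BorelSpace S] {l : Filter ι} [l.NeBot] {P : ι → FiniteMeasure S} {M : ℝ≥0}
    (hM : ∀ i, (P i).mass ≤ M)
    (htight : IsTightMeasureSet (Set.range fun i => (P i : Measure S)))
    (hconv : ∀ K, ∀ f ∈ blBall S K,
      ∃ c : ℝ, Tendsto (fun i => ∫ x, f x ∂(P i : Measure S)) l (𝓝 c)) :
    ∃ ν : FiniteMeasure S, Tendsto P l (𝓝 ν) := by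
  have isCompact_closure : IsCompact (closure (Set.range P)) :=
    isCompact_closure_of_isTightMeasureSet_of_mass_le (Set.forall_mem_range.2 hM)
      (by rwa [← Set.range_comp])
  have exists_tendsto : ∀ U : Ultrafilter ι, ∃ ν, Tendsto P U (𝓝 ν) := fun U => by
    obtain ⟨ν, -, hν⟩ := isCompact_closure.ultrafilter_le_nhds (U.map P) <|
      le_principal_iff.2 <| Filter.mem_map.2 <| univ_mem' fun i => subset_closure ⟨i, rfl⟩
    exact ⟨ν, hν⟩
  obtain ⟨ν, hν⟩ := exists_tendsto (Ultrafilter.of l)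
  refine ⟨ν, (tendsto_iff_ultrafilter _ _ _).2 fun U hU => ?_⟩
  obtain ⟨ν', hν'⟩ := exists_tendsto U
  suffices ν' = ν from this ▸ hν'
  refine FiniteMeasure.toMeasure_injective <| ext_of_forall_integral_eq fun K f hf => ?_
  obtain ⟨c, hc⟩ := hconv K f hf
  rw [tendsto_nhds_unique (tendsto_integral hν' hf) (hc.mono_left hU),
    tendsto_nhds_unique (tendsto_integral hν hf) (hc.mono_left (Ultrafilter.of_le l))]

end blBall

section Pairing

variable {S : Type*} [MeasurableSpace S]

theorem pairing_toSignedMeasure_sub_s1 (P Q : Measure S) [IsFiniteMeasure P] [IsFiniteMeasure Q]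
    {f : S → ℝ} (hP : Integrable f P) (hQ : Integrable f Q) :
    pairing (P.toSignedMeasure - Q.toSignedMeasure) f = ∫ x, f x ∂P - ∫ x, f x ∂Q := by
  have add_eq_add : (P - Q) + Q = P + (Q - P) := by
    rw [← Measure.toSignedMeasure_eq_toSignedMeasure_iff, Measure.toSignedMeasure_add,
      Measure.toSignedMeasure_add, ← sub_eq_sub_iff_add_eq_add,
      ← Measure.sub_toSignedMeasure_eq_toSignedMeasure_sub]
  have integral_eq := congrArg (fun ρ : Measure S => ∫ x, f x ∂ρ) add_eq_add
  simp only [integral_add_measure (hP.mono_measure Measure.sub_le) hQ,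
    integral_add_measure hP (hQ.mono_measure Measure.sub_le)] at integral_eq
  rw [pairing, Measure.toJordanDecomposition_toSignedMeasure_sub,
    Measure.jordanDecompositionOfToSignedMeasureSub_posPart,
    Measure.jordanDecompositionOfToSignedMeasureSub_negPart]
  linarith

theorem pairing_toSignedMeasure (P : Measure S) [IsFiniteMeasure P] (f : S → ℝ) :
    pairing P.toSignedMeasure f = ∫ x, f x ∂P := by
  rw [← sub_zero P.toSignedMeasure, ← Measure.toSignedMeasure_zero, pairing,
    Measure.toJordanDecomposition_toSignedMeasure_sub,
    Measure.jordanDecompositionOfToSignedMeasureSub_posPart,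
    Measure.jordanDecompositionOfToSignedMeasureSub_negPart, Measure.sub_zero, Measure.zero_sub,
    integral_zero_measure, sub_zero]

theorem exists_finiteMeasure_toSignedMeasure_eq {μ : SignedMeasure S} (hμ : 0 ≤ μ) :
    ∃ P : FiniteMeasure S, (P : Measure S).toSignedMeasure = μ :=
  have hμ_univ := (VectorMeasure.le_restrict_univ_iff_le 0 μ).2 hμ
  ⟨⟨μ.toMeasureOfZeroLE Set.univ .univ hμ_univ, inferInstance⟩,
    SignedMeasure.toMeasureOfZeroLE_toSignedMeasure μ hμ_univ⟩

end Pairing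

theorem tendsto_blDualNorm_sub_s1 {S ι : Type*} [PseudoMetricSpace S] [MeasurableSpace S]
    [OpensMeasurableSpace S] {l : Filter ι} {P : ι → FiniteMeasure S} {ν : FiniteMeasure S}
    (h : TendstoUniformly (fun i (f : blBall S 1) => ∫ x, f.1 x ∂(P i : Measure S))
      (fun f => ∫ x, f.1 x ∂(ν : Measure S)) l) :
    Tendsto (fun i => blDualNorm
      ((P i : Measure S).toSignedMeasure - (ν : Measure S).toSignedMeasure)) l (𝓝 0) := by
  refine Metric.tendsto_nhds.2 fun ε hε => ?_
  filter_upwards [Metric.tendstoUniformly_iff.1 h (ε / 2) (half_pos hε)] with i hi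
  have blDualNorm_nonneg : 0 ≤ blDualNorm
      ((P i : Measure S).toSignedMeasure - (ν : Measure S).toSignedMeasure) :=
    Real.sSup_nonneg fun r ⟨_, _, _, _, _, _, hr⟩ => hr ▸ abs_nonneg _
  rw [Real.dist_eq, sub_zero, abs_of_nonneg blDualNorm_nonneg]
  refine (Real.sSup_le ?_ (half_pos hε).le).trans_lt (half_lt_self hε)
  rintro r ⟨f, C, K, hC, hK, hCK, rfl⟩
  have hf : f ∈ blBall S 1 := blBall.mem_of_add_le_one hC hK hCK
  rw [pairing_toSignedMeasure_sub_s1 _ _ (blBall.integrable hf _) (blBall.integrable hf _),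
    abs_sub_comm]
  exact (hi ⟨f, hf⟩).le

/-- **Schur-like property, positive case.** If `(μ_n)` is a sequence of finite positive Borel
measures on a complete separable metric space such that `⟨μ_n, f⟩` converges for every bounded
Lipschitz `f`, then `⟨μ_n, f⟩` converges for every bounded continuous `f`, and there is a finite
positive Borel measure `μ` with `‖μ_n − μ‖*_BL → 0`. -/
theorem schur_like_positive {S : Type*} [MetricSpace S] [CompleteSpace S]
    [TopologicalSpace.SeparableSpace S] [MeasurableSpace S] [BorelSpace S]
    (μ : ℕ → SignedMeasure S) (hpos : ∀ n, 0 ≤ μ n)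
    (hconv : ∀ f : S → ℝ, IsBL f →
      ∃ l : ℝ, Tendsto (fun n => pairing (μ n) f) atTop (𝓝 l)) :
    (∀ f : S → ℝ, Continuous f → (∃ C : ℝ, ∀ x, |f x| ≤ C) →
      ∃ l : ℝ, Tendsto (fun n => pairing (μ n) f) atTop (𝓝 l)) ∧
    ∃ ν : SignedMeasure S, 0 ≤ ν ∧
      Tendsto (fun n => blDualNorm (μ n - ν)) atTop (𝓝 0) := by
  have : SecondCountableTopology S := UniformSpace.secondCountable_of_separable S
  choose P hP using fun n => exists_finiteMeasure_toSignedMeasure_eq (hpos n)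
  obtain rfl : (fun n => (P n : Measure S).toSignedMeasure) = μ := funext hP
  simp only [pairing_toSignedMeasure] at hconv ⊢
  have hconv_blBall : ∀ K, ∀ f ∈ blBall S K,
      ∃ l : ℝ, Tendsto (fun n => ∫ x, f x ∂(P n : Measure S)) atTop (𝓝 l) :=
    fun K f hf => hconv f ⟨⟨1, hf.1⟩, K, hf.2⟩
  have htight := blBall.isTightMeasureSet_range_of_tendsto_integral hconv_blBall
  obtain ⟨M, hM⟩ := exists_mass_le_of_tendsto_integral (hconv_blBall 0 _ blBall.one_mem)
  obtain ⟨ν, hν⟩ := blBall.exists_tendsto_of_isTightMeasureSet hM htight hconv_blBall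
  refine ⟨fun f hf ⟨C, hC⟩ => ⟨_, FiniteMeasure.tendsto_iff_forall_integral_tendsto.1 hν
    (.ofNormedAddCommGroup f hf C hC)⟩, (ν : Measure S).toSignedMeasure,
    Measure.zero_le_toSignedMeasure _,
    tendsto_blDualNorm_sub_s1 (blBall.tendstoUniformly_integral hM htight hν 1)⟩
end
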